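/- arXiv:2307.15594 — 2 statements merged into one kernel-verified Lean document; each statement's English description precedes it below -/
import Mathlib

section
/- Let n ≥ 2 and m ≥ 1 an integer. There is a constant c depending only on n and m such that for every f ∈ C_c^∞(ℝⁿ) and every x ∈ ℝⁿ, Mᵐf(x) ≤ c · I₁(|∇f|)(x), where Mᵐ is the m-fold iteration of the Hardy–Littlewood maximal operator. -/
/-!
The estimate rests on two facts about the kernel `k(z) = |z|^{1-n}`.

* `|f| ≤ C₀ I₁(|∇f|)` (`pointwise_riesz`). Since `f` has compact support, the fundamental theorem
  of calculus along a ray bounds `|f(x)|` by the integral over `t < 0` of `|u| |∇f(x + t u)|`.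
  Averaging over `u` in the annulus `1 ≤ |u| ≤ 2` and substituting `v = t u` turns this double
  integral into the Riesz potential, up to a constant.
* `M(I₁ g) ≤ C₁ I₁ g` for measurable `g` (`maximal_riesz`). By Tonelli this
  reduces to the `A₁` property `M k ≤ C₁ k` of the kernel (`rker_A1`).

As `M` is monotone and homogeneous, induction gives `Mᵐ f ≤ C₁ᵐ C₀ I₁(|∇f|)`.
-/

open MeasureTheory ENNReal Filter Set

noncomputable section

/-- `ℝⁿ` with the Euclidean structure. -/
abbrev En (n : ℕ) := EuclideanSpace ℝ (Fin n)

/-- Axis-parallel closed cube with corner `a` and side length `h`. -/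
def cube {n : ℕ} (a : En n) (h : ℝ) : Set (En n) := {y | ∀ i, a i ≤ y i ∧ y i ≤ a i + h}

/-- Riesz potential of order `1` of a (nonnegative) function:
`I₁ g (x) = ∫ g(y) |x-y|^{-(n-1)} dy`. -/
def riesz (n : ℕ) (g : En n → ℝ) (x : En n) : ℝ≥0∞ :=
  ∫⁻ y, ENNReal.ofReal (g y) * ENNReal.ofReal (‖x - y‖ ^ (-((n : ℝ) - 1)))

/-- The quantity `(∫ g^p dμ)^{1/p}` for an `ℝ≥0∞`-valued function `g`. -/
def lpNorm {α : Type*} [MeasurableSpace α] (p : ℝ) (g : α → ℝ≥0∞) (μ : Measure α) : ℝ≥0∞ :=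
  (∫⁻ x, g x ^ p ∂μ) ^ (1 / p)

/-- Average `⨍_Q g` of an `ℝ≥0∞`-valued function over a set `Q`. -/
def avgE {n : ℕ} (g : En n → ℝ≥0∞) (Q : Set (En n)) : ℝ≥0∞ :=
  (volume Q)⁻¹ * ∫⁻ x in Q, g x

/-- The `A_{p,p*}` constant of a weight `w`; here `ps` plays the role of `p*` and
`pp` that of `p' = p/(p-1)`:
`[w]_{A_{p,p*}} = sup_Q (⨍_Q w^{p*}) (⨍_Q w^{-p'})^{p*/p'}`. -/
def Apq (n : ℕ) (ps pp : ℝ) (w : En n → ℝ) : ℝ≥0∞ :=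
  ⨆ (a : En n) (h : ℝ) (_ : 0 < h),
    avgE (fun x => ENNReal.ofReal (w x) ^ ps) (cube a h) *
      avgE (fun x => ENNReal.ofReal (w x) ^ (-pp)) (cube a h) ^ (ps / pp)

/-- The `A_{1,s}` constant of a weight `w`: the least `c` such that
`⨍_Q w^s ≤ c · essinf_Q w^s` for every cube `Q`. -/
def A1C (n : ℕ) (s : ℝ) (w : En n → ℝ) : ℝ≥0∞ :=
  sInf {c : ℝ≥0∞ | ∀ (a : En n) (h : ℝ), 0 < h →
    avgE (fun x => ENNReal.ofReal (w x) ^ s) (cube a h) ≤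
      c * essInf (fun x => ENNReal.ofReal (w x) ^ s) (volume.restrict (cube a h))}

/-- Hardy–Littlewood maximal operator over axis-parallel cubes containing `x`. -/
def maximal (n : ℕ) (g : En n → ℝ≥0∞) (x : En n) : ℝ≥0∞ :=
  ⨆ (a : En n) (h : ℝ) (_ : 0 < h) (_ : x ∈ cube a h), avgE g (cube a h)

/-- Weak `L^s` quasinorm `sup_{t>0} t · μ{|g|>t}^{1/s}` of a real function. -/
def wnormR {α : Type*} [MeasurableSpace α] (s : ℝ) (g : α → ℝ) (μ : Measure α) : ℝ≥0∞ :=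
  ⨆ (t : ℝ) (_ : 0 < t), ENNReal.ofReal t * μ {x | t < |g x|} ^ (1 / s)

/-! ### The kernel `|z|^{1-n}` -/

/-- The kernel `|z|^{-(n-1)}` of the Riesz potential; its value at `0` is `0` for `n ≥ 2`. -/
def rker (n : ℕ) (z : En n) : ℝ≥0∞ := ENNReal.ofReal (‖z‖ ^ (-((n : ℝ) - 1)))

lemma measurable_rker (n : ℕ) : Measurable (rker n) := by
  unfold rker; fun_prop

lemma lintegral_dilate {n : ℕ} {F : En n → ℝ≥0∞} (hF : Measurable F) {t : ℝ} (ht : t ≠ 0) :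
    ∫⁻ u, F (t • u) = ENNReal.ofReal |(t ^ n)⁻¹| * ∫⁻ v, F v := by
  have h := Measure.map_addHaar_smul (volume : Measure (En n)) ht
  have h2 : ∫⁻ u, F (t • u) = ∫⁻ v, F v ∂(Measure.map (t • ·) (volume : Measure (En n))) :=
    (lintegral_map hF (measurable_const_smul t)).symm
  rw [h2, h, lintegral_smul_measure, finrank_euclideanSpace_fin, smul_eq_mul]

/-- The kernel is locally integrable because `r^{n-1} · r^{1-n} = 1` in polar coordinates. -/
lemma rker_ball_ne_top (n : ℕ) (hn : 2 ≤ n) :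
    ∫⁻ z in Metric.ball (0 : En n) 1, rker n z ≠ ⊤ := by
  have : Nontrivial (En n) := by
    have : Nonempty (Fin n) := ⟨⟨0, by omega⟩⟩
    infer_instance
  have h : IntegrableOn (fun z : En n => ‖z‖ ^ (-((n : ℝ) - 1))) (Metric.ball 0 1) := by
    rw [integrableOn_fun_norm_addHaar (μ := volume) (f := fun r : ℝ => r ^ (-((n : ℝ) - 1)))]
    have : IntegrableOn (fun _ : ℝ => (1 : ℝ)) (Ioo 0 1) := by
      simp
    refine this.congr_fun ?_ measurableSet_Ioo
    intro y hy
    have hy0 : 0 < y := hy.1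
    simp only [finrank_euclideanSpace_fin, smul_eq_mul]
    rw [← Real.rpow_natCast, ← Real.rpow_add hy0, Nat.cast_sub (by omega)]
    simp
  have h2 := h.lintegral_lt_top
  exact h2.ne

lemma rker_smul {n : ℕ} {R : ℝ} (hR : 0 < R) (z : En n) :
    rker n (R • z) = ENNReal.ofReal (R ^ (-((n : ℝ) - 1))) * rker n z := by
  unfold rker
  rw [norm_smul, Real.norm_of_nonneg hR.le, Real.mul_rpow hR.le (norm_nonneg _),
    ENNReal.ofReal_mul (by positivity)]

/-- The kernel decreases in `|z|`, away from its value at the origin. -/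
lemma rker_anti {n : ℕ} (hn : 2 ≤ n) {r : ℝ} (hr : 0 < r) {z : En n} (hz : r ≤ ‖z‖) :
    rker n z ≤ ENNReal.ofReal (r ^ (-((n : ℝ) - 1))) := by
  unfold rker
  apply ENNReal.ofReal_le_ofReal
  have : (2 : ℝ) ≤ n := by exact_mod_cast hn
  exact Real.rpow_le_rpow_of_nonpos hr hz (by linarith)

lemma rker_ball {n : ℕ} (y : En n) {R : ℝ} (hR : 0 < R) :
    ∫⁻ z in Metric.ball y R, rker n (z - y) =
      ENNReal.ofReal R * ∫⁻ z in Metric.ball (0 : En n) 1, rker n z := by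
  have hm : Measurable ((Metric.ball (0 : En n) R).indicator (rker n)) :=
    (measurable_rker n).indicator measurableSet_ball
  have h1 : ∫⁻ z in Metric.ball y R, rker n (z - y) =
      ∫⁻ z, (Metric.ball (0 : En n) R).indicator (rker n) z := by
    rw [← lintegral_indicator measurableSet_ball,
      ← lintegral_sub_right_eq_self ((Metric.ball (0 : En n) R).indicator (rker n)) y]
    congr 1; ext z
    simp only [indicator, Metric.mem_ball, dist_eq_norm, sub_zero]
  have h2 := lintegral_dilate hm hR.ne'
  have h3 : ∀ u : En n, (Metric.ball (0 : En n) R).indicator (rker n) (R • u) =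
      ENNReal.ofReal (R ^ (-((n : ℝ) - 1))) * (Metric.ball (0 : En n) 1).indicator (rker n) u := by
    intro u
    have : R • u ∈ Metric.ball (0 : En n) R ↔ u ∈ Metric.ball (0 : En n) 1 := by
      simp only [Metric.mem_ball, dist_zero_right, norm_smul, Real.norm_of_nonneg hR.le]
      constructor <;> intro h <;> nlinarith
    by_cases hu : u ∈ Metric.ball (0 : En n) 1
    · rw [indicator_of_mem (this.2 hu), indicator_of_mem hu, rker_smul hR]
    · rw [indicator_of_notMem (fun h => hu (this.1 h)), indicator_of_notMem hu, mul_zero]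
  simp_rw [h3] at h2
  rw [lintegral_const_mul _ ((measurable_rker n).indicator measurableSet_ball),
    lintegral_indicator measurableSet_ball] at h2
  rw [h1]
  have h4 : ENNReal.ofReal (R ^ n) * ENNReal.ofReal |(R ^ n)⁻¹| = 1 := by
    rw [← ENNReal.ofReal_mul (by positivity), abs_of_pos (by positivity),
      mul_inv_cancel₀ (by positivity), ENNReal.ofReal_one]
  have h5 : ENNReal.ofReal (R ^ n) * ENNReal.ofReal (R ^ (-((n : ℝ) - 1))) = ENNReal.ofReal R := by
    rw [← ENNReal.ofReal_mul (by positivity), ← Real.rpow_natCast, ← Real.rpow_add hR]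
    simp
  rw [← h5, mul_assoc, h2, ← mul_assoc, h4, one_mul]

/-! ### The `A₁` property of the kernel -/

lemma cube_eq {n : ℕ} (a : En n) (h : ℝ) :
    cube a h = (@WithLp.ofLp 2 (Fin n → ℝ)) ⁻¹' (Icc (fun i => a i) (fun i => a i + h)) := by
  ext y
  simp only [cube, mem_ofPred_eq, mem_preimage, mem_Icc, Pi.le_def]
  exact forall_and

lemma measurableSet_cube {n : ℕ} (a : En n) (h : ℝ) : MeasurableSet (cube a h) := by
  rw [cube_eq]
  exact (PiLp.volume_preserving_ofLp (Fin n)).measurable measurableSet_Icc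

lemma volume_cube {n : ℕ} (a : En n) (h : ℝ) : volume (cube a h) = ENNReal.ofReal h ^ n := by
  rw [cube_eq, (PiLp.volume_preserving_ofLp (Fin n)).measure_preimage
    measurableSet_Icc.nullMeasurableSet, Real.volume_Icc_pi]
  simp

lemma cube_diam {n : ℕ} {a : En n} {h : ℝ} (hh : 0 < h) {x z : En n} (hx : x ∈ cube a h)
    (hz : z ∈ cube a h) : ‖x - z‖ ≤ √n * h := by
  rw [EuclideanSpace.norm_eq]
  have : √(n : ℝ) * h = √(n * h ^ 2) := by
    rw [Real.sqrt_mul (by positivity), Real.sqrt_sq hh.le]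
  rw [this]
  apply Real.sqrt_le_sqrt
  calc ∑ i, ‖(x - z) i‖ ^ 2 ≤ ∑ _i : Fin n, h ^ 2 := by
        apply Finset.sum_le_sum
        intro i _
        have h1 := hx i
        have h2 := hz i
        have : ‖(x - z) i‖ ≤ h := by
          rw [Real.norm_eq_abs, abs_le]
          simp only [PiLp.sub_apply]
          constructor <;> linarith
        gcongr
    _ = n * h ^ 2 := by simp

/-- `M(|·|^{1-n}) ≤ C |·|^{1-n}` off the origin, uniformly in the cube. If `y` is far from the
cube the kernel is essentially constant there; otherwise the cube lies in a ball about `y` of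
comparable size, where the kernel can be integrated exactly. -/
lemma rker_A1 (n : ℕ) (hn : 2 ≤ n) : ∃ C : ℝ≥0∞, C ≠ ⊤ ∧ ∀ (a : En n) (h : ℝ), 0 < h →
    ∀ x ∈ cube a h, ∀ y, x ≠ y →
      (volume (cube a h))⁻¹ * ∫⁻ z in cube a h, rker n (z - y) ≤ C * rker n (x - y) := by
  set K := ∫⁻ z in Metric.ball (0 : En n) 1, rker n z with hK
  have hKt : K ≠ ⊤ := rker_ball_ne_top n hn
  set e : ℝ := -((n : ℝ) - 1) with he
  have hn2 : (2 : ℝ) ≤ n := by exact_mod_cast hn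
  have hs : 0 < √(n : ℝ) := Real.sqrt_pos.2 (by linarith)
  refine ⟨ENNReal.ofReal (2⁻¹ ^ e) + ENNReal.ofReal (3 * √n * ((2 * √n)⁻¹) ^ e) * K, ?_, ?_⟩
  · exact ENNReal.add_ne_top.2 ⟨ENNReal.ofReal_ne_top, ENNReal.mul_ne_top ENNReal.ofReal_ne_top hKt⟩
  intro a h hh x hx y hxy
  have hpos : 0 < ‖x - y‖ := norm_pos_iff.2 (sub_ne_zero.2 hxy)
  have hV : volume (cube a h) = ENNReal.ofReal (h ^ n) := by
    rw [volume_cube, ENNReal.ofReal_pow hh.le]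
  have hV0 : volume (cube a h) ≠ 0 := by
    rw [hV]; simp only [ne_eq, ENNReal.ofReal_eq_zero, not_le]; positivity
  have hVt : volume (cube a h) ≠ ⊤ := by rw [hV]; exact ENNReal.ofReal_ne_top
  rw [add_mul]
  rcases le_or_gt (2 * (√n * h)) ‖x - y‖ with hc | hc
  · refine le_add_right ?_
    have hb : ∫⁻ z in cube a h, rker n (z - y) ≤
        ENNReal.ofReal (2⁻¹ ^ e) * rker n (x - y) * volume (cube a h) := by
      rw [← setLIntegral_const]
      apply setLIntegral_mono' (measurableSet_cube a h)
      intro z hz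
      have h1 := cube_diam hh hx hz
      have h2 : ‖x - y‖ ≤ ‖x - z‖ + ‖z - y‖ := norm_sub_le_norm_sub_add_norm_sub x z y
      refine (rker_anti hn (r := 2⁻¹ * ‖x - y‖) (by positivity) (by linarith)).trans ?_
      unfold rker
      rw [← ENNReal.ofReal_mul (by positivity), Real.mul_rpow (by positivity) hpos.le]
    calc _ ≤ (volume (cube a h))⁻¹ *
          (ENNReal.ofReal (2⁻¹ ^ e) * rker n (x - y) * volume (cube a h)) := by gcongr
      _ = (ENNReal.ofReal (2⁻¹ ^ e) * rker n (x - y)) *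
          ((volume (cube a h))⁻¹ * volume (cube a h)) := by ring
      _ = _ := by rw [ENNReal.inv_mul_cancel hV0 hVt, mul_one]
  · refine le_add_left ?_
    have hsub : cube a h ⊆ Metric.ball y (3 * √n * h) := by
      intro z hz
      have h1 := cube_diam hh hz hx
      have h2 : ‖z - y‖ ≤ ‖z - x‖ + ‖x - y‖ := norm_sub_le_norm_sub_add_norm_sub z x y
      rw [Metric.mem_ball, dist_eq_norm]
      linarith
    have hb : ∫⁻ z in cube a h, rker n (z - y) ≤ ENNReal.ofReal (3 * √n * h) * K := by
      rw [hK, ← rker_ball y (by positivity)]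
      exact lintegral_mono_set hsub
    -- `h^{1-n}` is controlled by the kernel at `x - y` because `|x - y| < 2√n h`
    have hreal : (h ^ n)⁻¹ * (3 * √n * h) ≤ 3 * √n * ((2 * √n)⁻¹) ^ e * ‖x - y‖ ^ e := by
      have h1 : (2 * √n * h) ^ e ≤ ‖x - y‖ ^ e :=
        Real.rpow_le_rpow_of_nonpos hpos (by linarith) (by linarith)
      have h2 : (h ^ n)⁻¹ * h = h ^ e := by
        rw [he, neg_sub, sub_eq_add_neg, Real.rpow_add hh, Real.rpow_one, Real.rpow_neg hh.le,
          Real.rpow_natCast, mul_comm]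
      have h3 : ((2 * √n)⁻¹) ^ e * (2 * √n * h) ^ e = h ^ e := by
        rw [← Real.mul_rpow (by positivity) (by positivity)]
        congr 1
        field_simp
      calc (h ^ n)⁻¹ * (3 * √n * h) = 3 * √n * ((h ^ n)⁻¹ * h) := by ring
        _ = 3 * √n * (((2 * √n)⁻¹) ^ e * (2 * √n * h) ^ e) := by rw [h2, h3]
        _ ≤ 3 * √n * (((2 * √n)⁻¹) ^ e * ‖x - y‖ ^ e) := by gcongr
        _ = _ := by ring
    calc _ ≤ (volume (cube a h))⁻¹ * (ENNReal.ofReal (3 * √n * h) * K) := by gcongr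
      _ = ENNReal.ofReal ((h ^ n)⁻¹ * (3 * √n * h)) * K := by
        rw [hV, ← ENNReal.ofReal_inv_of_pos (by positivity), ← mul_assoc,
          ← ENNReal.ofReal_mul (by positivity)]
      _ ≤ ENNReal.ofReal (3 * √n * ((2 * √n)⁻¹) ^ e * ‖x - y‖ ^ e) * K := by gcongr
      _ = _ := by
        rw [ENNReal.ofReal_mul (by positivity)]
        unfold rker
        ring

/-! ### The maximal function of a Riesz potential -/

/-- `M(I₁ g) ≤ C I₁ g`: by Tonelli, averaging `I₁ g` amounts to averaging the kernel. -/
lemma maximal_riesz (n : ℕ) (hn : 2 ≤ n) : ∃ C : ℝ≥0∞, C ≠ ⊤ ∧ ∀ g : En n → ℝ, Measurable g →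
    ∀ x, maximal n (riesz n g) x ≤ C * riesz n g x := by
  obtain ⟨C, hC, H⟩ := rker_A1 n hn
  have : Nontrivial (En n) := by
    have : Nonempty (Fin n) := ⟨⟨0, by omega⟩⟩
    infer_instance
  refine ⟨C, hC, fun g hg x => ?_⟩
  have hgm : Measurable fun y => ENNReal.ofReal (g y) := hg.ennreal_ofReal
  refine iSup_le fun a => iSup_le fun h => iSup_le fun hh => iSup_le fun hx => ?_
  have e1 : ∫⁻ z in cube a h, riesz n g z =
      ∫⁻ y, ENNReal.ofReal (g y) * ∫⁻ z in cube a h, rker n (z - y) := by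
    unfold riesz
    change ∫⁻ z in cube a h, ∫⁻ y, ENNReal.ofReal (g y) * rker n (z - y) = _
    rw [lintegral_lintegral_swap]
    · congr 1; ext y
      exact lintegral_const_mul _ ((measurable_rker n).comp (measurable_id.sub_const y))
    · apply Measurable.aemeasurable
      exact (hgm.comp measurable_snd).mul
        ((measurable_rker n).comp (measurable_fst.sub measurable_snd))
  have hkm : Measurable fun y => ENNReal.ofReal (g y) * rker n (x - y) :=
    hgm.mul ((measurable_rker n).comp (measurable_id.const_sub x))
  unfold avgE
  rw [e1]
  change _ ≤ C * ∫⁻ y, ENNReal.ofReal (g y) * rker n (x - y)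
  have hVi : (volume (cube a h))⁻¹ ≠ ⊤ := by
    rw [volume_cube]
    simp only [ne_eq, ENNReal.inv_eq_top]
    exact pow_ne_zero _ (by simpa using hh)
  rw [← lintegral_const_mul' _ _ hVi, ← lintegral_const_mul _ hkm]
  apply lintegral_mono_ae
  have hae : ∀ᵐ y : En n, y ≠ x := by
    simp [ae_iff]
  filter_upwards [hae] with y hy
  calc _ = ENNReal.ofReal (g y) * ((volume (cube a h))⁻¹ * ∫⁻ z in cube a h, rker n (z - y)) := by
        ring
    _ ≤ ENNReal.ofReal (g y) * (C * rker n (x - y)) := by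
        exact mul_le_mul_right (H a h hh x hx y hy.symm) _
    _ = _ := by ring

lemma maximal_mono_const {n : ℕ} {F G : En n → ℝ≥0∞} {C : ℝ≥0∞} (hC : C ≠ ⊤)
    (h : ∀ x, F x ≤ C * G x) (x : En n) : maximal n F x ≤ C * maximal n G x := by
  refine iSup_le fun a => iSup_le fun r => iSup_le fun hr => iSup_le fun hx => ?_
  have h1 : avgE F (cube a r) ≤ C * avgE G (cube a r) := by
    unfold avgE
    calc _ ≤ (volume (cube a r))⁻¹ * ∫⁻ z in cube a r, C * G z := by
          gcongr with z
          exact h z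
      _ = _ := by rw [lintegral_const_mul' _ _ hC]; ring
  refine h1.trans ?_
  gcongr
  unfold maximal
  exact le_iSup_of_le a (le_iSup_of_le r (le_iSup_of_le hr (le_iSup_of_le hx le_rfl)))

/-! ### The pointwise bound for `f` -/

/-- Fundamental theorem of calculus along the ray from `x` in the direction `-u`. -/
lemma ray_bound {n : ℕ} {f : En n → ℝ} (hf : ContDiff ℝ (⊤ : ℕ∞) f) (hc : HasCompactSupport f)
    (x : En n) {u : En n} (hu : u ≠ 0) :
    ENNReal.ofReal |f x| ≤
      ∫⁻ t in Iic (0 : ℝ), ENNReal.ofReal ‖fderiv ℝ f (x + t • u)‖ * ENNReal.ofReal ‖u‖ := by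
  have hf1 : ContDiff ℝ 1 f := hf.of_le (by exact_mod_cast le_top)
  have hcd : ContDiff ℝ 1 fun t : ℝ => f (x + t • u) := by fun_prop
  have hcs : HasCompactSupport fun t : ℝ => f (x + t • u) := by
    have hemb : Topology.IsClosedEmbedding fun t : ℝ => x + t • u :=
      (Homeomorph.addLeft x).isClosedEmbedding.comp (isClosedEmbedding_smul_left hu)
    exact hc.comp_isClosedEmbedding hemb
  have h := HasCompactSupport.enorm_le_lintegral_Ici_deriv hcd hcs 0
  simp only [zero_smul, add_zero] at h
  rw [← Real.norm_eq_abs, ofReal_norm]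
  refine h.trans (lintegral_mono fun t => ?_)
  have hd : HasDerivAt (fun t : ℝ => f (x + t • u)) (fderiv ℝ f (x + t • u) u) t := by
    have h1 : HasDerivAt (fun t : ℝ => x + t • u) u t := by
      simpa using ((hasDerivAt_id t).smul_const u).const_add x
    exact ((hf1.differentiable one_ne_zero).differentiableAt.hasFDerivAt).comp_hasDerivAt t h1
  rw [hd.deriv, ← ENNReal.ofReal_mul (norm_nonneg _), ← ofReal_norm]
  exact ENNReal.ofReal_le_ofReal (ContinuousLinearMap.le_opNorm _ _)

/-- The closed annulus `1 ≤ |u| ≤ 2`. -/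
def annulus (n : ℕ) : Set (En n) := {u | 1 ≤ ‖u‖ ∧ ‖u‖ ≤ 2}

lemma measurableSet_annulus (n : ℕ) : MeasurableSet (annulus n) :=
  (measurableSet_le measurable_const measurable_norm).inter
    (measurableSet_le measurable_norm measurable_const)

lemma annulus_vol (n : ℕ) (hn : 2 ≤ n) :
    volume (annulus n) ≠ 0 ∧ volume (annulus n) ≠ ⊤ := by
  have : Nontrivial (En n) := by
    have : Nonempty (Fin n) := ⟨⟨0, by omega⟩⟩
    infer_instance
  constructor
  · obtain ⟨p, hp⟩ := exists_norm_eq (En n) (show (0 : ℝ) ≤ 3 / 2 by norm_num)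
    have hsub : Metric.ball p (1 / 2) ⊆ annulus n := by
      intro u hu
      rw [Metric.mem_ball, dist_eq_norm] at hu
      have h1 : |‖u‖ - ‖p‖| ≤ ‖u - p‖ := abs_norm_sub_norm_le u p
      rw [abs_le, hp] at h1
      exact ⟨by linarith [h1.1], by linarith [h1.2]⟩
    exact (lt_of_lt_of_le (Metric.measure_ball_pos volume p (by norm_num))
      (measure_mono hsub)).ne'
  · have hsub : annulus n ⊆ Metric.closedBall 0 2 := by
      intro u hu
      simpa using hu.2
    exact (lt_of_le_of_lt (measure_mono hsub) measure_closedBall_lt_top).ne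

/-- Only `t` with `|v|/2 ≤ |t| ≤ |v|` contribute, and there `|t|^{-n} ≤ 2^n |v|^{-n}`. -/
lemma radial_bound {n : ℕ} {v : En n} (hv : v ≠ 0) :
    ∫⁻ t in Iio (0 : ℝ), ENNReal.ofReal |(t ^ n)⁻¹| * (annulus n).indicator 1 (t⁻¹ • v) ≤
      2 ^ n * rker n v := by
  have hv0 : 0 < ‖v‖ := norm_pos_iff.2 hv
  have hb : ∀ t ∈ Iio (0 : ℝ), ENNReal.ofReal |(t ^ n)⁻¹| * (annulus n).indicator 1 (t⁻¹ • v) ≤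
      (Icc (-‖v‖) 0).indicator (fun _ => ENNReal.ofReal (2 ^ n * (‖v‖ ^ n)⁻¹)) t := by
    intro t ht
    have ht : t < 0 := ht
    by_cases hu : t⁻¹ • v ∈ annulus n
    · have h1 := hu.1
      have h2 := hu.2
      rw [norm_smul, norm_inv, Real.norm_eq_abs, abs_of_neg ht, inv_mul_eq_div] at h1 h2
      rw [le_div_iff₀ (by linarith)] at h1
      rw [div_le_iff₀ (by linarith)] at h2
      rw [indicator_of_mem hu, indicator_of_mem (by constructor <;> linarith), Pi.one_apply,
        mul_one]
      apply ENNReal.ofReal_le_ofReal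
      rw [abs_inv, abs_pow, abs_of_neg ht]
      have h3 : ‖v‖ ^ n ≤ 2 ^ n * (-t) ^ n := by
        rw [← mul_pow]
        gcongr
      rw [← div_eq_mul_inv, inv_eq_one_div, div_le_div_iff₀ (pow_pos (by linarith) n) (by positivity)]
      linarith
    · rw [indicator_of_notMem hu, mul_zero]
      exact zero_le
  refine (setLIntegral_mono' measurableSet_Iio hb).trans ?_
  refine (setLIntegral_le_lintegral _ _).trans ?_
  rw [lintegral_indicator measurableSet_Icc, setLIntegral_const, Real.volume_Icc,
    ← ENNReal.ofReal_mul (by positivity)]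
  unfold rker
  have h2n : (2 : ℝ≥0∞) ^ n = ENNReal.ofReal (2 ^ n) := by
    rw [ENNReal.ofReal_pow (by norm_num)]; simp
  rw [h2n, ← ENNReal.ofReal_mul (by positivity)]
  apply le_of_eq
  congr 1
  have he : ‖v‖ ^ (-((n : ℝ) - 1)) = ‖v‖ * (‖v‖ ^ n)⁻¹ := by
    rw [neg_sub, sub_eq_add_neg, Real.rpow_add hv0, Real.rpow_one, Real.rpow_neg hv0.le,
      Real.rpow_natCast]
  rw [he]
  ring

/-- `|f| ≤ C I₁(|∇f|)`: the ray bound averaged over directions in the annulus, followed by the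
dilation `v = t u`. -/
lemma pointwise_riesz (n : ℕ) (hn : 2 ≤ n) : ∃ C : ℝ≥0∞, C ≠ ⊤ ∧ ∀ f : En n → ℝ,
    ContDiff ℝ (⊤ : ℕ∞) f → HasCompactSupport f → ∀ x,
      ENNReal.ofReal |f x| ≤ C * riesz n (fun y => ‖fderiv ℝ f y‖) x := by
  obtain ⟨hA0, hAt⟩ := annulus_vol n hn
  have : Nontrivial (En n) := by
    have : Nonempty (Fin n) := ⟨⟨0, by omega⟩⟩
    infer_instance
  have hAm := measurableSet_annulus n
  refine ⟨(volume (annulus n))⁻¹ * (2 * 2 ^ n), ?_, ?_⟩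
  · exact ENNReal.mul_ne_top (ENNReal.inv_ne_top.2 hA0)
      (ENNReal.mul_ne_top (by simp) (by simp))
  intro f hf hc x
  set G : En n → ℝ≥0∞ := fun y => ENNReal.ofReal ‖fderiv ℝ f y‖ with hG
  have hGm : Measurable G := by
    have : Continuous (fderiv ℝ f) := hf.continuous_fderiv (by simp)
    exact this.norm.measurable.ennreal_ofReal
  have hIm : Measurable ((annulus n).indicator (1 : En n → ℝ≥0∞)) :=
    measurable_one.indicator hAm
  have key : ENNReal.ofReal |f x| * volume (annulus n) ≤
      2 * 2 ^ n * riesz n (fun y => ‖fderiv ℝ f y‖) x := by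
    calc ENNReal.ofReal |f x| * volume (annulus n)
        = ∫⁻ u in annulus n, ENNReal.ofReal |f x| := (setLIntegral_const _ _).symm
      _ ≤ ∫⁻ u in annulus n, ∫⁻ t in Iio (0 : ℝ), 2 * G (x + t • u) := by
          refine setLIntegral_mono' hAm fun u hu => ?_
          have hu0 : u ≠ 0 := by
            rintro rfl
            have := hu.1
            simp at this
            linarith
          refine (ray_bound hf hc x hu0).trans ?_
          rw [setLIntegral_congr Iio_ae_eq_Iic.symm]
          refine lintegral_mono fun t => ?_
          rw [mul_comm]
          gcongr
          exact ENNReal.ofReal_le_of_le_toReal (by simpa using hu.2)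
      _ = ∫⁻ t in Iio (0 : ℝ), ∫⁻ u in annulus n, 2 * G (x + t • u) := by
          apply lintegral_lintegral_swap
          apply Measurable.aemeasurable
          apply Measurable.const_mul
          apply hGm.comp
          fun_prop
      _ = ∫⁻ t in Iio (0 : ℝ), ∫⁻ v, 2 * G (x + v) *
            (ENNReal.ofReal |(t ^ n)⁻¹| * (annulus n).indicator 1 (t⁻¹ • v)) := by
          refine setLIntegral_congr_fun measurableSet_Iio fun t ht => ?_
          have ht0 : t ≠ 0 := ne_of_lt ht
          have hm : Measurable fun v => 2 * G (x + v) * (annulus n).indicator 1 (t⁻¹ • v) :=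
            ((hGm.comp (measurable_id.const_add x)).const_mul 2).mul
              (hIm.comp (measurable_const_smul t⁻¹))
          have hd := lintegral_dilate hm ht0
          rw [← lintegral_const_mul _ hm] at hd
          rw [← lintegral_indicator hAm]
          trans ∫⁻ u, 2 * G (x + t • u) * (annulus n).indicator 1 (t⁻¹ • t • u)
          · congr 1; ext u
            rw [inv_smul_smul₀ ht0]
            by_cases hu : u ∈ annulus n <;> simp [hu]
          · rw [hd]
            congr 1; ext v; ring
      _ = ∫⁻ v, ∫⁻ t in Iio (0 : ℝ), 2 * G (x + v) *
            (ENNReal.ofReal |(t ^ n)⁻¹| * (annulus n).indicator 1 (t⁻¹ • v)) := by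
          apply lintegral_lintegral_swap
          apply Measurable.aemeasurable
          refine Measurable.mul ((hGm.comp (measurable_snd.const_add x)).const_mul 2) ?_
          refine Measurable.mul (by fun_prop) (hIm.comp ?_)
          exact measurable_fst.inv.smul measurable_snd
      _ ≤ ∫⁻ v, 2 * 2 ^ n * (G (x + v) * rker n v) := by
          apply lintegral_mono_ae
          have hae : ∀ᵐ v : En n, v ≠ 0 := by simp [ae_iff]
          filter_upwards [hae] with v hv
          rw [lintegral_const_mul' _ _ (ENNReal.mul_ne_top (by simp) ENNReal.ofReal_ne_top)]
          calc _ ≤ 2 * G (x + v) * (2 ^ n * rker n v) := by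
                gcongr
                exact radial_bound hv
            _ = _ := by ring
      _ = 2 * 2 ^ n * ∫⁻ v, G (x + v) * rker n v := by
          rw [lintegral_const_mul' _ _ (ENNReal.mul_ne_top (by simp) (by simp))]
      _ = 2 * 2 ^ n * riesz n (fun y => ‖fderiv ℝ f y‖) x := by
          congr 1
          unfold riesz
          rw [← lintegral_add_left_eq_self (fun y => ENNReal.ofReal ‖fderiv ℝ f y‖ *
            ENNReal.ofReal (‖x - y‖ ^ (-((n : ℝ) - 1)))) x]
          congr 1; ext v
          simp [hG, rker]
  calc ENNReal.ofReal |f x|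
      = (volume (annulus n))⁻¹ * (ENNReal.ofReal |f x| * volume (annulus n)) := by
        rw [mul_comm (ENNReal.ofReal _), ← mul_assoc, ENNReal.inv_mul_cancel hA0 hAt, one_mul]
    _ ≤ _ := by
        rw [mul_assoc]
        gcongr

/-! ### Iteration -/

/-- pointwise bound for the iterated maximal function:
`Mᵐ f(x) ≤ c · I₁(|∇f|)(x)` for `f ∈ C_c^∞(ℝⁿ)`, with `c = c(n,m)`. -/
theorem statement6 (n m : ℕ) (hn : 2 ≤ n) (hm : 1 ≤ m) :
    ∃ c : ℝ, 0 < c ∧ ∀ f : En n → ℝ, ContDiff ℝ (⊤ : ℕ∞) f → HasCompactSupport f →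
      ∀ x : En n,
        (maximal n)^[m] (fun y => ENNReal.ofReal |f y|) x ≤
          ENNReal.ofReal c * riesz n (fun y => ‖fderiv ℝ f y‖) x := by
  obtain ⟨C₀, hC₀, H₀⟩ := pointwise_riesz n hn
  obtain ⟨C₁, hC₁, H₁⟩ := maximal_riesz n hn
  have hD : C₁ ^ m * C₀ ≠ ⊤ := ENNReal.mul_ne_top (ENNReal.pow_ne_top hC₁) hC₀
  -- the added `1` makes the real constant positive
  refine ⟨(C₁ ^ m * C₀).toReal + 1, by positivity, fun f hf hc x => ?_⟩
  have hg : Measurable fun y => ‖fderiv ℝ f y‖ :=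
    (hf.continuous_fderiv (by simp)).norm.measurable
  have ind : ∀ k : ℕ, ∀ x, (maximal n)^[k] (fun y => ENNReal.ofReal |f y|) x ≤
      C₁ ^ k * C₀ * riesz n (fun y => ‖fderiv ℝ f y‖) x := by
    intro k
    induction k with
    | zero => intro x; simpa using H₀ f hf hc x
    | succ k ih =>
      intro x
      rw [Function.iterate_succ_apply']
      refine (maximal_mono_const (ENNReal.mul_ne_top (ENNReal.pow_ne_top hC₁) hC₀) ih x).trans ?_
      calc _ ≤ C₁ ^ k * C₀ * (C₁ * riesz n (fun y => ‖fderiv ℝ f y‖) x) := by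
            gcongr
            exact H₁ _ hg x
        _ = _ := by ring
  refine (ind m x).trans ?_
  gcongr
  rw [ENNReal.le_ofReal_iff_toReal_le hD (by positivity)]
  linarith
end
end

section
/- Let n ≥ 2, m ≥ 1 an integer, 1 < p < n, and set p* = np/(n−p), p' = p/(p−1), n' = n/(n−1). There is a constant c depending only on n, m, p such that for every weight w with [w]_{A_{p,p*}} < ∞ and every f ∈ C_c^∞(ℝⁿ), ‖w · Mᵐf‖_{L^{p*}(ℝⁿ)} ≤ c · [w]_{A_{p,p*}}^{(1/n')·max{1, p'/p*}} · ‖w |∇f|‖_{L^{p}(ℝⁿ)}. -/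
/-!
Write `q = p* = np/(n-p)`, `θ = (n-1)/n = 1/n'` and `r = 1 + q/p'`, so that `r = q θ`. The operator
behind the inequality is a discrete Riesz potential of order one,
`Jop g x = ∑_j 2^{j(1-n)} ∫_{|y-x|_∞ ≤ 2^j} g`, applied to `g = |∇f|`.

*Reduction to the potential.* Integrating along rays and averaging over a cube of directions gives
`|f| ≤ C · Jop |∇f|` (`le_Jop_fderiv`). The potential satisfies the `A₁` condition
`M (Jop g) ≤ C · Jop g` (`maximal_Jop_le`), so every iterated maximal function of `f` is dominated
by `Jop |∇f|` with a constant depending on `n` and `m` only (`iterate_maximal_le`). It remains to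
bound `Jop` from `L^p(w^p)` to `L^q(w^q)`.

*Reduction to dyadic operators.* By the one-third trick `Jop` is bounded by the sum over the `2^n`
shifted dyadic grids of `∑_Q |Q|^{-θ} (∫_Q g) 1_Q` (`Jop_le_dyFrac`).

*The dyadic bound.* With `dσ = w^{-p'} dx` and `du = w^q dx`, the hypothesis on `w` is the `A_r` type
condition `u(Q) σ(Q)^{r-1} ≤ [w] |Q|^r`. By duality the claim concerns the bilinear forms
`∑_Q |Q|^{-θ} ∫_Q f dσ ∫_Q g du`. Passing to principal cubes makes the family sparse
(`form_le_principal`, `sparse`). For a sparse family and `θ = 1` the form is bounded on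
`L^r(σ) × L^{r'}(u)` by `C [w]^{max(1, 1/(r-1))}` (`sparse_Ar`); this is the sharp `A_r` argument via
the dyadic maximal functions relative to `σ` and `u`. The kernel of the fractional form is pointwise
at most a constant times the `θ`-th power of the kernel for exponent one (`kernel_le`), so Hölder's
inequality interpolates between that bound and the trivial `L¹(σ) × L¹(u)` bound of the form with
kernel one (`sparse_frac`). This raises the constant to the power `θ`, which yields the exponent
`θ max(1, 1/(r-1)) = (1/n') max(1, p'/q)`.

A weight with finite constant is either null or positive almost everywhere (`ae_zero_or_ae_pos`);
in the first case there is nothing to prove, in the second `σ` and `u` are finite on cubes.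
-/

open MeasureTheory ENNReal Filter Set

noncomputable section

/-! ### Dyadic level sums and the dyadic maximal function -/

/-- The geometric series `∑_{i ≥ 0} 2^{-s i}`. -/
def geomC (s : ℝ) : ℝ≥0∞ := ∑' i : ℕ, (2 : ℝ≥0∞) ^ (-(s * i))

lemma two_rpow_ne_top (s : ℝ) : (2 : ℝ≥0∞) ^ s ≠ ∞ :=
  ENNReal.rpow_ne_top_of_ne_zero (by norm_num) (by norm_num)

lemma two_rpow_ne_zero (s : ℝ) : (2 : ℝ≥0∞) ^ s ≠ 0 := by
  simp [ENNReal.rpow_eq_zero_iff]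

lemma two_rpow_add (s t : ℝ) : (2 : ℝ≥0∞) ^ (s + t) = 2 ^ s * 2 ^ t :=
  ENNReal.rpow_add _ _ (by norm_num) (by norm_num)

lemma geomC_ne_top {s : ℝ} (hs : 0 < s) : geomC s ≠ ∞ := by
  have h : geomC s = ∑' i : ℕ, ((2 : ℝ≥0∞) ^ (-s)) ^ i := by
    unfold geomC
    congr 1; ext i
    rw [← ENNReal.rpow_natCast, ← ENNReal.rpow_mul]; ring_nf
  rw [h, ENNReal.tsum_geometric]
  apply ENNReal.inv_ne_top.2
  have : (2 : ℝ≥0∞) ^ (-s) < 1 := ENNReal.rpow_lt_one_of_one_lt_of_neg (by norm_num) (by linarith)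
  exact (tsub_pos_of_lt this).ne'

lemma tsum_le_geom (s : ℝ) (J : ℤ) :
    ∑' k : ℤ, (if k ≤ J then (2 : ℝ≥0∞) ^ (s * k) else 0) = geomC s * 2 ^ (s * J) := by
  have hinj : Function.Injective (fun i : ℕ => J - (i : ℤ)) := by
    intro a b h; simpa using h
  rw [← hinj.tsum_eq]
  · unfold geomC
    rw [← ENNReal.tsum_mul_right]
    congr 1; ext i
    rw [if_pos (by simp), ← two_rpow_add]
    push_cast; ring_nf
  · intro k hk
    have : k ≤ J := by
      by_contra h
      simp [h] at hk
    exact ⟨(J - k).toNat, by simp; omega⟩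

lemma tsum_ge_geom (s : ℝ) (J : ℤ) :
    ∑' k : ℤ, (if J ≤ k then (2 : ℝ≥0∞) ^ (-(s * k)) else 0) = geomC s * 2 ^ (-(s * J)) := by
  have := tsum_le_geom s (-J)
  rw [← (Equiv.neg ℤ).tsum_eq] at this
  simpa using this

/-- A dyadic level sum `∑_{2^k < t} 2^{sk}` is comparable to `t^s`. -/
lemma tsum_lt_geom {s : ℝ} (hs : 0 < s) (t : ℝ≥0∞) :
    ∑' k : ℤ, (if (2 : ℝ≥0∞) ^ (k : ℝ) < t then (2 : ℝ≥0∞) ^ (s * k) else 0) ≤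
      geomC s * t ^ s := by
  rcases eq_or_ne t 0 with rfl | h0
  · simp
  rcases eq_or_ne t ∞ with rfl | h1
  · have : geomC s ≠ 0 := by
      unfold geomC
      rw [Ne, ENNReal.tsum_eq_zero]
      intro h; simpa using h 0
    simp [hs, ENNReal.mul_top this]
  obtain ⟨J, hJ1, hJ2⟩ := ENNReal.exists_mem_Ioc_zpow h0 h1 (y := 2) (by norm_num) (by norm_num)
  calc _ ≤ ∑' k : ℤ, (if k ≤ J then (2 : ℝ≥0∞) ^ (s * k) else 0) := by
        refine ENNReal.tsum_le_tsum fun k => ?_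
        by_cases h : (2 : ℝ≥0∞) ^ (k : ℝ) < t
        · have hk : k ≤ J := by
            by_contra hk
            push Not at hk
            have : (2 : ℝ≥0∞) ^ (J + 1) ≤ 2 ^ k := ENNReal.zpow_le_of_le (by norm_num) hk
            rw [ENNReal.rpow_intCast] at h
            exact absurd (hJ2.trans this) (not_le.2 h)
          rw [if_pos h, if_pos hk]
        · rw [if_neg h]; exact zero_le
    _ = _ := tsum_le_geom s J
    _ ≤ _ := by
        gcongr
        rw [mul_comm, ENNReal.rpow_mul, ENNReal.rpow_intCast]
        gcongr

/-- `t^r` is dominated by the sum of `2^{(k+2)r}` over the dyadic levels `2^{k+1} < t`. -/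
lemma rpow_le_tsum_levels {r : ℝ} (hr : 0 < r) (t : ℝ≥0∞) :
    t ^ r ≤ ∑' k : ℤ, (if (2 : ℝ≥0∞) * 2 ^ (k : ℝ) < t then (2 : ℝ≥0∞) ^ (r * (k + 2)) else 0) := by
  rcases eq_or_ne t 0 with rfl | h0
  · simp [hr]
  rcases eq_or_ne t ∞ with rfl | h1
  · have : ∀ k : ℕ, (1 : ℝ≥0∞) ≤ 2 ^ (r * (((k : ℤ) : ℝ) + 2)) := fun k =>
      ENNReal.one_le_rpow (by norm_num) (by push_cast; positivity)
    have h2 : (∞ : ℝ≥0∞) = ∑' k : ℕ, (1 : ℝ≥0∞) := by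
      rw [ENNReal.tsum_const_eq_top_of_ne_zero]; norm_num
    rw [ENNReal.top_rpow_of_pos hr, h2]
    calc _ ≤ ∑' k : ℕ, (2 : ℝ≥0∞) ^ (r * (((k : ℤ) : ℝ) + 2)) := ENNReal.tsum_le_tsum this
      _ ≤ ∑' k : ℤ, (2 : ℝ≥0∞) ^ (r * ((k : ℝ) + 2)) :=
        ENNReal.tsum_comp_le_tsum_of_injective (f := fun k : ℕ => (k : ℤ)) Nat.cast_injective
          (fun k : ℤ => (2 : ℝ≥0∞) ^ (r * ((k : ℝ) + 2)))
      _ ≤ _ := by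
        refine ENNReal.tsum_le_tsum fun k => ?_
        rw [← h2, if_pos]
        exact ENNReal.mul_lt_top (by norm_num) (two_rpow_ne_top _).lt_top
  obtain ⟨J, hJ1, hJ2⟩ := ENNReal.exists_mem_Ioc_zpow h0 h1 (y := 2) (by norm_num) (by norm_num)
  refine le_trans ?_ (ENNReal.le_tsum (J - 1))
  have e1 : (2 : ℝ≥0∞) * 2 ^ (((J - 1 : ℤ)) : ℝ) = 2 ^ J := by
    nth_rewrite 1 [← ENNReal.rpow_one 2]
    rw [← two_rpow_add, ← ENNReal.rpow_intCast]
    push_cast; ring_nf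
  rw [e1, if_pos hJ1]
  have : r * (((J - 1 : ℤ) : ℝ) + 2) = ((J + 1 : ℤ) : ℝ) * r := by push_cast; ring
  rw [this, ENNReal.rpow_mul, ENNReal.rpow_intCast]
  gcongr

/-- An abstract dyadic grid: a family of measurable cubes `S i` with level `lev i` and
`μ`-measure `2^{d · lev i}`, any two of which are disjoint or nested. -/
structure DGrid {X : Type*} [MeasurableSpace X] (ι : Type*) (μ : Measure X) (d : ℝ) where
  /-- the underlying set of a cube -/
  S : ι → Set X
  /-- the level (binary logarithm of the side length) of a cube -/
  lev : ι → ℤ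
  meas : ∀ i, MeasurableSet (S i)
  vol : ∀ i, μ (S i) = 2 ^ (d * lev i)
  disj : ∀ i j, lev i = lev j → i ≠ j → Disjoint (S i) (S j)
  nest : ∀ i j, lev i < lev j → Disjoint (S i) (S j) ∨ S i ⊆ S j

namespace DGrid

variable {X : Type*} [MeasurableSpace X] {ι : Type*} {μ : Measure X} {d : ℝ}

lemma sub_or_disj (D : DGrid ι μ d) {i j : ι} (h : D.lev i ≤ D.lev j) :
    Disjoint (D.S i) (D.S j) ∨ D.S i ⊆ D.S j := by
  rcases h.lt_or_eq with h | h
  · exact D.nest i j h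
  · by_cases hij : i = j
    · right; rw [hij]
    · left; exact D.disj i j h hij

/-- If `c μ'(Q) ≤ ν(Q)` for each cube of a finite family, the same holds for the union: the union
is the disjoint union of the maximal cubes. -/
lemma union_le (D : DGrid ι μ d) (G : Finset ι) (μ' ν : Measure X) (c : ℝ≥0∞)
    (h : ∀ i ∈ G, c * μ' (D.S i) ≤ ν (D.S i)) :
    c * μ' (⋃ i ∈ G, D.S i) ≤ ν (⋃ i ∈ G, D.S i) := by
  classical
  induction hN : G.card using Nat.strong_induction_on generalizing G with
  | _ N ih =>
  rcases G.eq_empty_or_nonempty with rfl | hG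
  · simp
  obtain ⟨q, hq, hmax⟩ := G.exists_max_image D.lev hG
  set G' := G.filter (fun i => Disjoint (D.S i) (D.S q)) with hG'
  by_cases hne : D.S q = ∅
  · have hlt : (G.erase q).card < N := by
      rw [← hN]; exact Finset.card_erase_lt_of_mem hq
    have := ih _ hlt (G.erase q) (fun i hi => h i (Finset.mem_of_mem_erase hi)) rfl
    have e : (⋃ i ∈ G, D.S i) = ⋃ i ∈ G.erase q, D.S i := by
      ext x; simp only [mem_iUnion, Finset.mem_erase, exists_prop]
      constructor
      · rintro ⟨i, hi, hx⟩
        refine ⟨i, ⟨?_, hi⟩, hx⟩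
        rintro rfl; rw [hne] at hx; exact hx
      · rintro ⟨i, ⟨_, hi⟩, hx⟩; exact ⟨i, hi, hx⟩
    rwa [e]
  have hqG' : q ∉ G' := by
    simp [hG', hne]
  have hlt : G'.card < N := by
    rw [← hN]
    refine Finset.card_lt_card ⟨Finset.filter_subset _ _, fun hh => hqG' (hh hq)⟩
  have h1 := ih _ hlt G' (fun i hi => h i (Finset.mem_filter.1 hi).1) rfl
  have e : (⋃ i ∈ G, D.S i) = D.S q ∪ ⋃ i ∈ G', D.S i := by
    ext x; simp only [mem_iUnion, mem_union, exists_prop]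
    constructor
    · rintro ⟨i, hi, hx⟩
      rcases D.sub_or_disj (hmax i hi) with h2 | h2
      · right; exact ⟨i, by simp [hG', hi, h2], hx⟩
      · left; exact h2 hx
    · rintro (hx | ⟨i, hi, hx⟩)
      · exact ⟨q, hq, hx⟩
      · exact ⟨i, (Finset.mem_filter.1 hi).1, hx⟩
  have hd : Disjoint (D.S q) (⋃ i ∈ G', D.S i) := by
    simp only [disjoint_iUnion_right]
    intro i hi
    exact (Finset.mem_filter.1 hi).2.symm
  have hm : MeasurableSet (⋃ i ∈ G', D.S i) := Finset.measurableSet_biUnion _ fun i _ => D.meas i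
  rw [e, measure_union hd hm, measure_union hd hm, mul_add]
  exact add_le_add (h q hq) h1

/-- The average of `φ` over the cube `i` with respect to `σ`. -/
def av (D : DGrid ι μ d) (σ : Measure X) (φ : X → ℝ≥0∞) (i : ι) : ℝ≥0∞ :=
  (∫⁻ x in D.S i, φ x ∂σ) / σ (D.S i)

/-- The dyadic maximal function relative to `σ` and a finite family of cubes. -/
def maxf (D : DGrid ι μ d) (G : Finset ι) (σ : Measure X) (φ : X → ℝ≥0∞) (x : X) : ℝ≥0∞ :=
  ⨆ i ∈ G, (D.S i).indicator (fun _ => D.av σ φ i) x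

lemma measurable_maxf (D : DGrid ι μ d) (G : Finset ι) (σ : Measure X) (φ : X → ℝ≥0∞) :
    Measurable (D.maxf G σ φ) :=
  Measurable.biSup _ G.countable_toSet fun i _ => measurable_const.indicator (D.meas i)

/-- Weak type estimate for the part of `φ` above the height `t`, which integrates to the strong type
estimate for every exponent `r > 1`. -/
lemma weak_type (D : DGrid ι μ d) (G : Finset ι) (σ : Measure X) (φ : X → ℝ≥0∞)
    (hφ : Measurable φ) (hσ : ∀ i ∈ G, σ (D.S i) ≠ ∞) (t : ℝ≥0∞) :
    t * σ {x | 2 * t < D.maxf G σ φ x} ≤ ∫⁻ x, {x | t < φ x}.indicator φ x ∂σ := by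
  classical
  set G' := G.filter (fun i => 2 * t < D.av σ φ i)
  have e : {x | 2 * t < D.maxf G σ φ x} ⊆ ⋃ i ∈ G', D.S i := by
    intro x hx
    simp only [mem_ofPred_eq, maxf, lt_iSup_iff] at hx
    obtain ⟨i, hi, hx⟩ := hx
    have hxi : x ∈ D.S i := by
      by_contra h
      simp [h] at hx
    rw [indicator_of_mem hxi] at hx
    simp only [mem_iUnion]
    exact ⟨i, by simp [G', hi, hx], hxi⟩
  have hms : MeasurableSet {x | t < φ x} := measurableSet_lt measurable_const hφ
  have key := D.union_le G' σ (σ.withDensity ({x | t < φ x}.indicator φ)) t ?_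
  · calc _ ≤ t * σ (⋃ i ∈ G', D.S i) := by gcongr
      _ ≤ _ := key
      _ ≤ (σ.withDensity ({x | t < φ x}.indicator φ)) univ := measure_mono (subset_univ _)
      _ = _ := by rw [withDensity_apply _ MeasurableSet.univ]; simp
  · intro i hi
    obtain ⟨hi, hti⟩ := Finset.mem_filter.1 hi
    rw [withDensity_apply _ (D.meas i)]
    have h1 : 2 * t * σ (D.S i) ≤ ∫⁻ x in D.S i, φ x ∂σ := by
      exact ENNReal.mul_le_of_le_div hti.le
    have htt : t ≠ ∞ := by
      rintro rfl
      simp at hti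
    have h2 : ∫⁻ x in D.S i, φ x ∂σ ≤
        (∫⁻ x in D.S i, {x | t < φ x}.indicator φ x ∂σ) + t * σ (D.S i) := by
      calc _ ≤ ∫⁻ x in D.S i, ({x | t < φ x}.indicator φ x + t) ∂σ := by
            refine lintegral_mono fun x => ?_
            by_cases h : t < φ x
            · simp [h]
            · simp [h, not_lt.1 h]
        _ = _ := by
            rw [lintegral_add_right _ measurable_const]
            simp
    have h3 := h1.trans h2
    rw [mul_assoc, two_mul] at h3
    exact ENNReal.le_of_add_le_add_right (ENNReal.mul_ne_top htt (hσ i hi)) h3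

/-- The constant in the `L^r` bound of the dyadic maximal function. -/
def maxC (r : ℝ) : ℝ≥0∞ := 2 ^ (2 * r) * geomC (r - 1)

lemma maxC_ne_top {r : ℝ} (hr : 1 < r) : maxC r ≠ ∞ :=
  ENNReal.mul_ne_top (two_rpow_ne_top _) (geomC_ne_top (by linarith))

/-- The dyadic maximal function relative to `σ` is bounded on `L^r(σ)`, uniformly in `σ`. -/
lemma strong_type (D : DGrid ι μ d) (G : Finset ι) (σ : Measure X) (φ : X → ℝ≥0∞)
    (hφ : Measurable φ) (hσ : ∀ i ∈ G, σ (D.S i) ≠ ∞) {r : ℝ} (hr : 1 < r) :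
    ∫⁻ x, D.maxf G σ φ x ^ r ∂σ ≤ maxC r * ∫⁻ x, φ x ^ r ∂σ := by
  have hM := D.measurable_maxf G σ φ
  have hms : ∀ t : ℝ≥0∞, MeasurableSet {x | t < φ x} := fun t => measurableSet_lt measurable_const hφ
  have hmM : ∀ t : ℝ≥0∞, MeasurableSet {x | t < D.maxf G σ φ x} :=
    fun t => measurableSet_lt measurable_const hM
  calc _ ≤ ∫⁻ x, ∑' k : ℤ, {x | (2 : ℝ≥0∞) * 2 ^ (k : ℝ) < D.maxf G σ φ x}.indicator
            (fun _ => (2 : ℝ≥0∞) ^ (r * (k + 2))) x ∂σ := by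
        refine lintegral_mono fun x => ?_
        refine (rpow_le_tsum_levels (by linarith) _).trans (le_of_eq ?_)
        congr 1; ext k
        simp only [indicator_apply, mem_ofPred_eq]
    _ = ∑' k : ℤ, (2 : ℝ≥0∞) ^ (r * (k + 2)) *
          σ {x | (2 : ℝ≥0∞) * 2 ^ (k : ℝ) < D.maxf G σ φ x} := by
        rw [lintegral_tsum fun k => (measurable_const.indicator (hmM _)).aemeasurable]
        congr 1; ext k
        rw [lintegral_indicator (hmM _)]; simp
    _ ≤ ∑' k : ℤ, (2 : ℝ≥0∞) ^ (2 * r) * ((2 : ℝ≥0∞) ^ ((r - 1) * k) *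
          ∫⁻ x, {x | (2 : ℝ≥0∞) ^ (k : ℝ) < φ x}.indicator φ x ∂σ) := by
        refine ENNReal.tsum_le_tsum fun k => ?_
        have e : r * ((k : ℝ) + 2) = 2 * r + ((r - 1) * k + k) := by ring
        rw [e, two_rpow_add, two_rpow_add, mul_assoc, mul_assoc]
        gcongr
        exact D.weak_type G σ φ hφ hσ _
    _ = (2 : ℝ≥0∞) ^ (2 * r) * ∫⁻ x, ∑' k : ℤ, (2 : ℝ≥0∞) ^ ((r - 1) * k) *
          {x | (2 : ℝ≥0∞) ^ (k : ℝ) < φ x}.indicator φ x ∂σ := by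
        rw [ENNReal.tsum_mul_left, lintegral_tsum]
        · congr 2; ext k
          rw [lintegral_const_mul _ (hφ.indicator (hms _))]
        · exact fun k => ((hφ.indicator (hms _)).const_mul _).aemeasurable
    _ ≤ (2 : ℝ≥0∞) ^ (2 * r) * ∫⁻ x, geomC (r - 1) * φ x ^ r ∂σ := by
        gcongr with x
        calc _ = (∑' k : ℤ, if (2 : ℝ≥0∞) ^ (k : ℝ) < φ x then (2 : ℝ≥0∞) ^ ((r - 1) * k) else 0)
                  * φ x := by
              rw [← ENNReal.tsum_mul_right]
              congr 1; ext k
              simp only [indicator_apply, mem_ofPred_eq]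
              split_ifs <;> simp
          _ ≤ geomC (r - 1) * φ x ^ (r - 1) * φ x := by
              gcongr; exact tsum_lt_geom (by linarith) _
          _ = _ := by
              rw [mul_assoc]
              congr 1
              nth_rewrite 2 [← ENNReal.rpow_one (φ x)]
              rw [← ENNReal.rpow_add_of_nonneg _ _ (by linarith) (by linarith)]
              ring_nf
    _ = _ := by
        rw [lintegral_const_mul _ (hφ.pow_const r), maxC, mul_assoc]

end DGrid

/-! ### Principal cubes and the sparse `A_r` bound -/

lemma exists_two_rpow {x : ℝ≥0∞} (h0 : x ≠ 0) (h1 : x ≠ ∞) : ∃ a : ℝ, x = 2 ^ a := by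
  refine ⟨Real.logb 2 x.toReal, ?_⟩
  have hx : 0 < x.toReal := ENNReal.toReal_pos h0 h1
  have h2 : (2 : ℝ≥0∞) = ENNReal.ofReal 2 := by simp
  rw [h2, ENNReal.ofReal_rpow_of_pos (by norm_num), Real.rpow_logb (by norm_num) (by norm_num) hx,
    ENNReal.ofReal_toReal h1]

lemma two_rpow_le_iff {a b : ℝ} : (2 : ℝ≥0∞) ^ a ≤ 2 ^ b ↔ a ≤ b := by
  constructor
  · intro h
    by_contra hab
    push Not at hab
    have := ENNReal.rpow_lt_rpow_of_exponent_lt (x := 2) (by norm_num) (by norm_num) hab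
    exact absurd h (not_le.2 this)
  · intro h
    exact ENNReal.rpow_le_rpow_of_exponent_le (by norm_num) h

/-- The numerical form of the sparse `A_r` estimate on one cube: `m` is the Lebesgue measure of the
cube, `U, S` its weighted measures, and `Ue, Se` the weighted measures of a subset `E` carrying at
least half of the Lebesgue measure. After taking logarithms it is a linear inequality. -/
lemma Ar_numeric {r : ℝ} (hr : 1 < r) {m U S Ue Se A : ℝ≥0∞} (hm0 : m ≠ 0) (hm1 : m ≠ ∞)
    (hU : U ≠ ∞) (hS : S ≠ ∞) (hA : A ≠ ∞) (hUe : Ue ≤ U) (hSe : Se ≤ S)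
    (hE : m ≤ 2 * (Ue ^ (1 / r) * Se ^ (1 - 1 / r)))
    (hAr : U * S ^ (r - 1) ≤ A * m ^ r) :
    m⁻¹ * (S * U) ≤ 2 ^ ((r - 1) + 1 / (r - 1)) * A ^ (max 1 (1 / (r - 1))) *
      (Se ^ (1 / r) * Ue ^ (1 - 1 / r)) := by
  have hr0 : 0 < r := by linarith
  have hr1 : 0 < r - 1 := by linarith
  have hir : 0 < 1 / r := by positivity
  have hir' : 0 < 1 - 1 / r := by
    rw [sub_pos, div_lt_one hr0]; exact hr
  have hne : Ue ^ (1 / r) * Se ^ (1 - 1 / r) ≠ 0 := by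
    intro h; rw [h] at hE; simp at hE; exact hm0 hE
  have hUe0 : Ue ≠ 0 := by
    rintro rfl; rw [ENNReal.zero_rpow_of_pos hir] at hne; simp at hne
  have hSe0 : Se ≠ 0 := by
    rintro rfl; rw [ENNReal.zero_rpow_of_pos hir'] at hne; simp at hne
  have hU0 : U ≠ 0 := fun h => hUe0 (by simpa [h] using hUe)
  have hS0 : S ≠ 0 := fun h => hSe0 (by simpa [h] using hSe)
  have hA0 : A ≠ 0 := by
    rintro rfl
    simp only [zero_mul, nonpos_iff_eq_zero, mul_eq_zero, hU0, false_or] at hAr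
    exact (ENNReal.rpow_pos (pos_iff_ne_zero.2 hS0) hS).ne' hAr
  obtain ⟨m, rfl⟩ := exists_two_rpow hm0 hm1
  obtain ⟨U, rfl⟩ := exists_two_rpow hU0 hU
  obtain ⟨S, rfl⟩ := exists_two_rpow hS0 hS
  obtain ⟨A, rfl⟩ := exists_two_rpow hA0 hA
  obtain ⟨E, rfl⟩ := exists_two_rpow hUe0 (ne_top_of_le_ne_top hU hUe)
  obtain ⟨F, rfl⟩ := exists_two_rpow hSe0 (ne_top_of_le_ne_top hS hSe)
  have h2 : (2 : ℝ≥0∞) * (2 ^ (E * (1 / r)) * 2 ^ (F * (1 - 1 / r)))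
    = 2 ^ (1 + (E * (1 / r) + F * (1 - 1 / r))) := by
    rw [two_rpow_add, two_rpow_add, ENNReal.rpow_one]
  simp only [← ENNReal.rpow_mul, ← two_rpow_add, ← ENNReal.rpow_neg, two_rpow_le_iff] at *
  rw [h2, two_rpow_le_iff] at hE
  clear h2 hne hm0 hm1 hU hS hA hUe0 hSe0 hU0 hS0 hA0
  obtain ⟨ρ, rfl⟩ : ∃ ρ, r = 1 + ρ := ⟨r - 1, by ring⟩
  simp only [add_sub_cancel_left] at *
  have e1 : 1 - 1 / (1 + ρ) = ρ / (1 + ρ) := by field_simp; ring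
  rw [e1] at *
  have hE' : m * (1 + ρ) ≤ (1 + ρ) + E + F * ρ := by
    have := mul_le_mul_of_nonneg_right hE hr0.le
    field_simp at this
    linarith
  suffices h : (-m + (S + U)) * (1 + ρ) ≤
      (ρ + 1 / ρ + A * max 1 (1 / ρ)) * (1 + ρ) + (F + E * ρ) by
    have e2 : F * (1 / (1 + ρ)) + E * (ρ / (1 + ρ)) = (F + E * ρ) / (1 + ρ) := by
      field_simp
    rw [e2, ← sub_nonneg]
    have e3 : ρ + 1 / ρ + A * max 1 (1 / ρ) + (F + E * ρ) / (1 + ρ) - (-m + (S + U)) =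
      ((ρ + 1 / ρ + A * max 1 (1 / ρ)) * (1 + ρ) + (F + E * ρ) - (-m + (S + U)) * (1 + ρ))
        / (1 + ρ) := by
      field_simp
    rw [e3]
    exact div_nonneg (by linarith) hr0.le
  rcases le_total 1 ρ with h | h
  · have hmax : max 1 (1 / ρ) = 1 := max_eq_left (by rw [div_le_one hr1]; exact h)
    rw [hmax]
    have hi : 0 < 1 / ρ := by positivity
    nlinarith [mul_le_mul_of_nonneg_left hE' hr1.le, mul_nonneg (sub_nonneg.2 h) (sub_nonneg.2 hSe),
      mul_le_mul_of_nonneg_left hAr hr0.le, mul_pos hi hr0,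
      mul_nonneg (mul_nonneg (sub_nonneg.2 h) (sub_nonneg.2 hSe)) hr0.le]
  · have hmax : max 1 (1 / ρ) = 1 / ρ := max_eq_right (by rw [le_div_iff₀ hr1]; linarith)
    rw [hmax]
    have goal' : (-m + (S + U)) * (1 + ρ) * ρ ≤
        (ρ * ρ + 1 + A) * (1 + ρ) + (F + E * ρ) * ρ := by
      nlinarith [mul_nonneg (sub_nonneg.2 h) (sub_nonneg.2 hUe),
        mul_le_mul_of_nonneg_left hAr hr0.le, mul_pos hr1 hr0, mul_pos hr1 hr1,
        mul_nonneg (mul_nonneg (sub_nonneg.2 h) (sub_nonneg.2 hUe)) hr0.le,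
        mul_pos (mul_pos hr1 hr1) hr0]
    have e4 : (ρ + 1 / ρ + A * (1 / ρ)) * (1 + ρ) + (F + E * ρ) =
      ((ρ * ρ + 1 + A) * (1 + ρ) + (F + E * ρ) * ρ) / ρ := by field_simp
    rw [e4, le_div_iff₀ hr1]
    exact goal'

namespace DGrid

variable {X : Type*} [MeasurableSpace X] {ι : Type*} {μ : Measure X} {d : ℝ}

/-- Principal cubes: a subfamily `T` of a finite family dominating it in the sense that each `Q`
lies in some `P ∈ T` with `h Q ≤ 2 h P`, while `h` more than doubles along strict inclusions in
`T`. -/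
lemma exists_principal (D : DGrid ι μ d) (h : ι → ℝ≥0∞) (G : Finset ι) :
    ∃ T ⊆ G, (∀ i ∈ G, ∃ j ∈ T, D.lev i ≤ D.lev j ∧ D.S i ⊆ D.S j ∧ h i ≤ 2 * h j) ∧
      ∀ i ∈ T, ∀ j ∈ T, D.lev i < D.lev j → D.S i ⊆ D.S j → 2 * h j < h i := by
  classical
  induction G using Finset.induction_on_min_value D.lev with
  | empty => exact ⟨∅, by simp⟩
  | insert a s ha hmin ih =>
    obtain ⟨T, hTs, hdom, hT⟩ := ih
    by_cases hex : ∃ j ∈ T, D.S a ⊆ D.S j ∧ h a ≤ 2 * h j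
    · refine ⟨T, hTs.trans (Finset.subset_insert _ _), ?_, hT⟩
      intro i hi
      rcases Finset.mem_insert.1 hi with rfl | hi
      · obtain ⟨j, hj, h1⟩ := hex
        exact ⟨j, hj, hmin j (hTs hj), h1⟩
      · exact hdom i hi
    · refine ⟨insert a T, Finset.insert_subset_insert _ hTs, ?_, ?_⟩
      · intro i hi
        rcases Finset.mem_insert.1 hi with rfl | hi
        · exact ⟨i, Finset.mem_insert_self _ _, le_rfl, subset_rfl, le_mul_of_one_le_left' (by norm_num)⟩
        · obtain ⟨j, hj, h1⟩ := hdom i hi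
          exact ⟨j, Finset.mem_insert_of_mem hj, h1⟩
      · intro i hi j hj hlt hsub
        rcases Finset.mem_insert.1 hi with rfl | hi2
        · rcases Finset.mem_insert.1 hj with rfl | hj
          · exact absurd hlt (lt_irrefl _)
          · by_contra hc
            exact hex ⟨j, hj, hsub, not_lt.1 hc⟩
        · rcases Finset.mem_insert.1 hj with rfl | hj
          · exact absurd hlt (not_lt.2 (hmin i (hTs hi2)))
          · exact hT i hi2 j hj hlt hsub

open Classical in
/-- The cubes of `T` strictly inside the cube `j`. -/
def below (D : DGrid ι μ d) (T : Finset ι) (j : ι) : Finset ι :=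
  T.filter (fun i => D.lev i < D.lev j ∧ D.S i ⊆ D.S j)

/-- The part of the cube `j` outside the smaller cubes of `T`. -/
def ex (D : DGrid ι μ d) (T : Finset ι) (j : ι) : Set X :=
  D.S j \ ⋃ i ∈ D.below T j, D.S i

lemma ex_subset (D : DGrid ι μ d) (T : Finset ι) (j : ι) : D.ex T j ⊆ D.S j := sdiff_subset

lemma measurable_ex (D : DGrid ι μ d) (T : Finset ι) (j : ι) : MeasurableSet (D.ex T j) :=
  (D.meas j).diff (Finset.measurableSet_biUnion _ fun i _ => D.meas i)

/-- The sets `D.ex T j`, for `j` in `T`, are pairwise disjoint. -/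
lemma ex_disjoint (D : DGrid ι μ d) (T : Finset ι) :
    (T : Set ι).PairwiseDisjoint (D.ex T) := by
  have key : ∀ i ∈ T, ∀ j ∈ T, D.lev i < D.lev j → Disjoint (D.ex T i) (D.ex T j) := by
    intro i hi j hj hlt
    rcases D.nest i j hlt with h | h
    · exact h.mono (D.ex_subset T i) (D.ex_subset T j)
    · refine Disjoint.mono_left (D.ex_subset T i) ?_
      rw [Set.disjoint_left]
      intro x hx hx'
      refine hx'.2 ?_
      simp only [mem_iUnion]
      exact ⟨i, by simp [below, hi, hlt, h], hx⟩
  intro i hi j hj hij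
  rcases lt_trichotomy (D.lev i) (D.lev j) with h | h | h
  · exact key i hi j hj h
  · exact (D.disj i j h hij).mono (D.ex_subset T i) (D.ex_subset T j)
  · exact (key j hj i hi h).symm

lemma vol_ne_zero (D : DGrid ι μ d) (i : ι) : μ (D.S i) ≠ 0 := by
  rw [D.vol]; exact two_rpow_ne_zero _

lemma vol_ne_top (D : DGrid ι μ d) (i : ι) : μ (D.S i) ≠ ∞ := by
  rw [D.vol]; exact two_rpow_ne_top _

/-- Principal cubes with respect to the averages of a measure `ν` are sparse. -/
lemma sparse (D : DGrid ι μ d) (T : Finset ι) (ν : Measure X)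
    (h0 : ∀ i ∈ T, ν (D.S i) ≠ 0) (h1 : ∀ i ∈ T, ν (D.S i) ≠ ∞)
    (hT : ∀ i ∈ T, ∀ j ∈ T, D.lev i < D.lev j → D.S i ⊆ D.S j →
      2 * (ν (D.S j) / μ (D.S j)) < ν (D.S i) / μ (D.S i)) (j : ι) (hj : j ∈ T) :
    μ (D.S j) ≤ 2 * μ (D.ex T j) := by
  classical
  set B := ⋃ i ∈ D.below T j, D.S i with hB
  have hBm : MeasurableSet B := Finset.measurableSet_biUnion _ fun i _ => D.meas i
  have hBS : B ⊆ D.S j := by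
    simp only [hB, iUnion_subset_iff]
    intro i hi
    exact (Finset.mem_filter.1 hi).2.2
  have k1 : 2 * (ν (D.S j) / μ (D.S j)) * μ B ≤ ν B := by
    refine D.union_le _ μ ν _ fun i hi => ?_
    obtain ⟨hi, hlt, hsub⟩ := Finset.mem_filter.1 hi
    exact ENNReal.mul_le_of_le_div (hT i hi j hj hlt hsub).le
  have k2 : 2 * (ν (D.S j) / μ (D.S j)) * μ B ≤ ν (D.S j) := k1.trans (measure_mono hBS)
  have k3 : 2 * μ B ≤ μ (D.S j) := by
    have e : ν (D.S j) = (ν (D.S j) / μ (D.S j)) * μ (D.S j) :=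
      (ENNReal.div_mul_cancel (D.vol_ne_zero j) (D.vol_ne_top j)).symm
    nth_rewrite 2 [e] at k2
    rw [mul_comm 2, mul_assoc] at k2
    refine (ENNReal.mul_le_mul_iff_right ?_ ?_).1 k2
    · exact ENNReal.div_ne_zero.2 ⟨h0 j hj, D.vol_ne_top j⟩
    · exact ENNReal.div_ne_top (h1 j hj) (D.vol_ne_zero j)
  have k4 : μ (D.S j) = μ B + μ (D.ex T j) := by
    rw [ex, ← hB, ← measure_inter_add_sdiff (D.S j) hBm, inter_eq_right.2 hBS]
  have hBt : μ B ≠ ∞ := ne_top_of_le_ne_top (D.vol_ne_top j) (measure_mono hBS)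
  rw [k4, two_mul] at k3
  have k5 : μ B ≤ μ (D.ex T j) := ENNReal.le_of_add_le_add_left hBt k3
  rw [k4, two_mul]
  gcongr

/-- On the disjoint sets `D.ex T i` the averages of `φ` are below its maximal function, so their
`ℓ^r` sum is controlled by the maximal theorem. -/
lemma sum_av_ex_le (D : DGrid ι μ d) (T : Finset ι) (σ : Measure X) (φ : X → ℝ≥0∞)
    (hφ : Measurable φ) (hσ : ∀ i ∈ T, σ (D.S i) ≠ ∞) {r : ℝ} (hr : 1 < r) :
    ∑ i ∈ T, D.av σ φ i ^ r * σ (D.ex T i) ≤ maxC r * ∫⁻ x, φ x ^ r ∂σ := by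
  refine le_trans ?_ (D.strong_type T σ φ hφ hσ hr)
  calc _ ≤ ∑ i ∈ T, ∫⁻ x in D.ex T i, D.maxf T σ φ x ^ r ∂σ := by
        refine Finset.sum_le_sum fun i hi => ?_
        rw [← setLIntegral_const]
        refine setLIntegral_mono' (D.measurable_ex T i) fun x hx => ?_
        refine ENNReal.rpow_le_rpow ?_ (by linarith)
        unfold maxf
        refine le_trans ?_ (le_iSup₂ (f := fun i (_ : i ∈ T) =>
          (D.S i).indicator (fun _ => D.av σ φ i) x) i hi)
        rw [indicator_of_mem (D.ex_subset T i hx)]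
    _ = ∫⁻ x in ⋃ i ∈ T, D.ex T i, D.maxf T σ φ x ^ r ∂σ :=
        (lintegral_biUnion_finset (D.ex_disjoint T) (fun i _ => D.measurable_ex T i) _).symm
    _ ≤ _ := setLIntegral_le_lintegral _ _

/-- The constant in the sparse `A_r` bound. -/
def ArC (r : ℝ) : ℝ≥0∞ :=
  2 ^ ((r - 1) + 1 / (r - 1)) * (maxC r ^ (1 / r) * maxC (r / (r - 1)) ^ (1 - 1 / r))

lemma ArC_ne_top {r : ℝ} (hr : 1 < r) : ArC r ≠ ∞ := by
  have h1 : 1 < r / (r - 1) := by rw [lt_div_iff₀ (by linarith)]; linarith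
  have h2 : 1 / r ≤ 1 := by rw [div_le_one (by linarith)]; linarith
  refine ENNReal.mul_ne_top (two_rpow_ne_top _) (ENNReal.mul_ne_top ?_ ?_)
  · exact ENNReal.rpow_ne_top_of_nonneg (by positivity) (maxC_ne_top hr)
  · exact ENNReal.rpow_ne_top_of_nonneg (by linarith) (maxC_ne_top h1)

/-- The `A_r` bound for sparse forms, with the sharp power of the `A_r` constant. -/
lemma sparse_Ar (D : DGrid ι μ d) (T : Finset ι) (σ u : Measure X) {r : ℝ} (hr : 1 < r)
    {A : ℝ≥0∞} (hA : A ≠ ∞)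
    (hσ : ∀ i ∈ T, σ (D.S i) ≠ ∞) (hu : ∀ i ∈ T, u (D.S i) ≠ ∞)
    (hH : ∀ E, MeasurableSet E → μ E ≤ u E ^ (1 / r) * σ E ^ (1 - 1 / r))
    (hAr : ∀ i ∈ T, u (D.S i) * σ (D.S i) ^ (r - 1) ≤ A * μ (D.S i) ^ r)
    (hsp : ∀ i ∈ T, μ (D.S i) ≤ 2 * μ (D.ex T i))
    (φ γ : X → ℝ≥0∞) (hφ : Measurable φ) (hγ : Measurable γ) :
    ∑ i ∈ T, (μ (D.S i))⁻¹ * ((∫⁻ x in D.S i, φ x ∂σ) * ∫⁻ x in D.S i, γ x ∂u) ≤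
      ArC r * A ^ (max 1 (1 / (r - 1))) *
        ((∫⁻ x, φ x ^ r ∂σ) ^ (1 / r) * (∫⁻ x, γ x ^ (r / (r - 1)) ∂u) ^ (1 - 1 / r)) := by
  have hr0 : 0 < r := by linarith
  have hr1 : 0 < r - 1 := by linarith
  have hi0 : 0 < 1 / r := by positivity
  have h1 : 1 < r / (r - 1) := by rw [lt_div_iff₀ (by linarith)]; linarith
  have h2 : 1 / r < 1 := by rw [div_lt_one (by linarith)]; linarith
  have hconj : r.HolderConjugate (r / (r - 1)) := Real.HolderConjugate.conjExponent hr
  have e1 : 1 / (r / (r - 1)) = 1 - 1 / r := by field_simp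
  have hpos : ∀ i ∈ T, u (D.S i) ≠ 0 ∧ σ (D.S i) ≠ 0 := by
    intro i hi
    have := hH _ (D.meas i)
    constructor
    · intro h
      rw [h, ENNReal.zero_rpow_of_pos hi0, zero_mul] at this
      exact D.vol_ne_zero i (by simpa using this)
    · intro h
      rw [h, ENNReal.zero_rpow_of_pos (by linarith), mul_zero] at this
      exact D.vol_ne_zero i (by simpa using this)
  calc _ ≤ ∑ i ∈ T, 2 ^ ((r - 1) + 1 / (r - 1)) * A ^ (max 1 (1 / (r - 1))) *
          ((D.av σ φ i * σ (D.ex T i) ^ (1 / r)) * (D.av u γ i * u (D.ex T i) ^ (1 - 1 / r))) := by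
        refine Finset.sum_le_sum fun i hi => ?_
        have ea : ∫⁻ x in D.S i, φ x ∂σ = D.av σ φ i * σ (D.S i) :=
          (ENNReal.div_mul_cancel (hpos i hi).2 (hσ i hi)).symm
        have eb : ∫⁻ x in D.S i, γ x ∂u = D.av u γ i * u (D.S i) :=
          (ENNReal.div_mul_cancel (hpos i hi).1 (hu i hi)).symm
        have hnum := Ar_numeric hr (D.vol_ne_zero i) (D.vol_ne_top i) (hu i hi) (hσ i hi) hA
          (measure_mono (D.ex_subset T i)) (measure_mono (D.ex_subset T i))
          ((hsp i hi).trans (mul_le_mul_right (hH _ (D.measurable_ex T i)) 2)) (hAr i hi)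
        rw [ea, eb]
        calc _ = (D.av σ φ i * D.av u γ i) * ((μ (D.S i))⁻¹ * (σ (D.S i) * u (D.S i))) := by ring
          _ ≤ _ := mul_le_mul_right hnum _
          _ = _ := by ring
    _ = 2 ^ ((r - 1) + 1 / (r - 1)) * A ^ (max 1 (1 / (r - 1))) * ∑ i ∈ T,
          ((D.av σ φ i * σ (D.ex T i) ^ (1 / r)) * (D.av u γ i * u (D.ex T i) ^ (1 - 1 / r))) := by
        rw [Finset.mul_sum]
    _ ≤ 2 ^ ((r - 1) + 1 / (r - 1)) * A ^ (max 1 (1 / (r - 1))) *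
          ((maxC r * ∫⁻ x, φ x ^ r ∂σ) ^ (1 / r) *
            (maxC (r / (r - 1)) * ∫⁻ x, γ x ^ (r / (r - 1)) ∂u) ^ (1 - 1 / r)) := by
        gcongr
        refine (ENNReal.inner_le_Lp_mul_Lq _ _ _ hconj).trans ?_
        rw [e1]
        gcongr ?_ ^ _ * ?_ ^ _
        · refine le_trans (le_of_eq ?_) (D.sum_av_ex_le T σ φ hφ hσ hr)
          refine Finset.sum_congr rfl fun i _ => ?_
          rw [ENNReal.mul_rpow_of_nonneg _ _ hr0.le, ← ENNReal.rpow_mul, one_div_mul_cancel hr0.ne',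
            ENNReal.rpow_one]
        · refine le_trans (le_of_eq ?_) (D.sum_av_ex_le T u γ hγ hu h1)
          refine Finset.sum_congr rfl fun i _ => ?_
          have e2 : (1 - 1 / r) * (r / (r - 1)) = 1 := by field_simp
          rw [ENNReal.mul_rpow_of_nonneg _ _ (by positivity), ← ENNReal.rpow_mul, e2,
            ENNReal.rpow_one]
    _ = _ := by
        rw [ENNReal.mul_rpow_of_nonneg _ _ hi0.le, ENNReal.mul_rpow_of_nonneg _ _ (by linarith), ArC]
        ring

end DGrid

/-! ### Interpolation: from the sparse form to the fractional form -/

namespace DGrid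

variable {X : Type*} [MeasurableSpace X] {ι : Type*} {μ : Measure X} {d : ℝ}

/-- The indicator function of the cube `i`. -/
def ind (D : DGrid ι μ d) (i : ι) (x : X) : ℝ≥0∞ := (D.S i).indicator 1 x

lemma measurable_ind (D : DGrid ι μ d) (i : ι) : Measurable (D.ind i) :=
  measurable_one.indicator (D.meas i)

lemma ind_of_mem (D : DGrid ι μ d) {i : ι} {x : X} (h : x ∈ D.S i) : D.ind i x = 1 := by
  simp [ind, h]

lemma ind_of_notMem (D : DGrid ι μ d) {i : ι} {x : X} (h : x ∉ D.S i) : D.ind i x = 0 := by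
  simp [ind, h]

lemma lintegral_ind_mul (D : DGrid ι μ d) (i : ι) (u : Measure X) (g : X → ℝ≥0∞) :
    ∫⁻ x, D.ind i x * g x ∂u = ∫⁻ x in D.S i, g x ∂u := by
  rw [← lintegral_indicator (D.meas i)]
  congr 1; ext x
  by_cases h : x ∈ D.S i
  · simp [D.ind_of_mem h, h]
  · simp [D.ind_of_notMem h, h]

lemma lev_injOn (D : DGrid ι μ d) (Z : Finset ι) (x : X) (hx : ∀ i ∈ Z, x ∈ D.S i) :
    Set.InjOn D.lev Z := by
  intro i hi j hj hij
  by_contra hne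
  exact Set.disjoint_left.1 (D.disj i j hij hne) (hx i hi) (hx j hj)

lemma sum_chain_le (D : DGrid ι μ d) (Z : Finset ι) (x : X) (hx : ∀ i ∈ Z, x ∈ D.S i) (J : ℤ)
    (hJ : ∀ i ∈ Z, D.lev i ≤ J) (s : ℝ) :
    ∑ i ∈ Z, (2 : ℝ≥0∞) ^ (s * D.lev i) ≤ geomC s * 2 ^ (s * J) := by
  classical
  rw [← tsum_le_geom]
  calc _ = ∑ k ∈ Z.image D.lev, (2 : ℝ≥0∞) ^ (s * k) := by
        rw [Finset.sum_image (D.lev_injOn Z x hx)]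
    _ = ∑ k ∈ Z.image D.lev, (if k ≤ J then (2 : ℝ≥0∞) ^ (s * k) else 0) := by
        refine Finset.sum_congr rfl fun k hk => ?_
        obtain ⟨i, hi, rfl⟩ := Finset.mem_image.1 hk
        rw [if_pos (hJ i hi)]
    _ ≤ _ := ENNReal.sum_le_tsum _

lemma sum_chain_ge (D : DGrid ι μ d) (Z : Finset ι) (x : X) (hx : ∀ i ∈ Z, x ∈ D.S i) (J : ℤ)
    (hJ : ∀ i ∈ Z, J ≤ D.lev i) (s : ℝ) :
    ∑ i ∈ Z, (2 : ℝ≥0∞) ^ (-(s * D.lev i)) ≤ geomC s * 2 ^ (-(s * J)) := by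
  classical
  rw [← tsum_ge_geom]
  calc _ = ∑ k ∈ Z.image D.lev, (2 : ℝ≥0∞) ^ (-(s * k)) := by
        rw [Finset.sum_image (D.lev_injOn Z x hx)]
    _ = ∑ k ∈ Z.image D.lev, (if J ≤ k then (2 : ℝ≥0∞) ^ (-(s * k)) else 0) := by
        refine Finset.sum_congr rfl fun k hk => ?_
        obtain ⟨i, hi, rfl⟩ := Finset.mem_image.1 hk
        rw [if_pos (hJ i hi)]
    _ ≤ _ := ENNReal.sum_le_tsum _

/-- The fractional kernel of exponent `θ` is dominated by the `θ`-th power of the kernel of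
exponent `1`: the first is a geometric series comparable to the term of the smallest cube
containing both points, and that term also occurs in the second. -/
lemma kernel_le (D : DGrid ι μ d) (T : Finset ι) {θ : ℝ} (hθ : 0 < θ) (x y : X) :
    ∑ i ∈ T, μ (D.S i) ^ (-θ) * (D.ind i x * D.ind i y) ≤
      geomC (d * θ) * (∑ i ∈ T, (μ (D.S i))⁻¹ * (D.ind i x * D.ind i y)) ^ θ := by
  classical
  set Z := T.filter (fun i => x ∈ D.S i ∧ y ∈ D.S i) with hZ
  have hsum : ∑ i ∈ T, μ (D.S i) ^ (-θ) * (D.ind i x * D.ind i y) =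
      ∑ i ∈ Z, (2 : ℝ≥0∞) ^ (-((d * θ) * D.lev i)) := by
    rw [hZ, Finset.sum_filter]
    refine Finset.sum_congr rfl fun i _ => ?_
    split_ifs with h
    · rw [D.ind_of_mem h.1, D.ind_of_mem h.2, D.vol, ← ENNReal.rpow_mul]
      simp only [mul_one]
      ring_nf
    · rcases not_and_or.1 h with h | h <;> simp [D.ind_of_notMem h]
  rw [hsum]
  rcases Z.eq_empty_or_nonempty with h | h
  · simp [h]
  obtain ⟨q, hq, hmin⟩ := Z.exists_min_image D.lev h
  refine (D.sum_chain_ge Z x (fun i hi => (Finset.mem_filter.1 hi).2.1) (D.lev q) hmin _).trans ?_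
  obtain ⟨hqT, hqx, hqy⟩ := Finset.mem_filter.1 hq
  gcongr
  have e : (2 : ℝ≥0∞) ^ (-(d * θ * D.lev q)) = ((μ (D.S q))⁻¹) ^ θ := by
    rw [D.vol, ← ENNReal.rpow_neg, ← ENNReal.rpow_mul]; ring_nf
  rw [e]
  gcongr
  refine le_trans (le_of_eq ?_) (Finset.single_le_sum (f := fun i =>
    (μ (D.S i))⁻¹ * (D.ind i x * D.ind i y)) (fun i _ => zero_le) hqT)
  simp [D.ind_of_mem hqx, D.ind_of_mem hqy]

/-- A bilinear form over cubes as a double integral against its kernel. -/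
lemma form_eq (D : DGrid ι μ d) (T : Finset ι) (σ u : Measure X) [SFinite σ] [SFinite u]
    (c : ι → ℝ≥0∞) (f g : X → ℝ≥0∞) (hf : Measurable f) (hg : Measurable g) :
    ∑ i ∈ T, c i * ((∫⁻ x in D.S i, f x ∂σ) * ∫⁻ x in D.S i, g x ∂u) =
      ∫⁻ z, (∑ i ∈ T, c i * (D.ind i z.1 * D.ind i z.2)) * (f z.1 * g z.2) ∂(σ.prod u) := by
  have hm : ∀ i ∈ T, Measurable (fun z : X × X => c i * ((D.ind i z.1 * f z.1) *
      (D.ind i z.2 * g z.2))) := by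
    intro i _
    have h1 : Measurable (fun z : X × X => D.ind i z.1) := (D.measurable_ind i).comp measurable_fst
    have h2 : Measurable (fun z : X × X => D.ind i z.2) := (D.measurable_ind i).comp measurable_snd
    exact ((h1.mul (hf.comp measurable_fst)).mul (h2.mul (hg.comp measurable_snd))).const_mul _
  calc _ = ∑ i ∈ T, ∫⁻ z, c i * ((D.ind i z.1 * f z.1) * (D.ind i z.2 * g z.2)) ∂(σ.prod u) := by
        refine Finset.sum_congr rfl fun i _ => ?_
        have h1 : Measurable (fun z : X × X => D.ind i z.1) :=
          (D.measurable_ind i).comp measurable_fst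
        have h2 : Measurable (fun z : X × X => D.ind i z.2) :=
          (D.measurable_ind i).comp measurable_snd
        rw [lintegral_const_mul (f := fun z : X × X => (D.ind i z.1 * f z.1) *
            (D.ind i z.2 * g z.2)) _ ((h1.mul (hf.comp measurable_fst)).mul (h2.mul (hg.comp measurable_snd))),
          lintegral_prod_mul (f := fun x => D.ind i x * f x) (g := fun x => D.ind i x * g x)
            ((D.measurable_ind i).mul hf).aemeasurable
            ((D.measurable_ind i).mul hg).aemeasurable, D.lintegral_ind_mul, D.lintegral_ind_mul]
    _ = _ := by
        rw [← lintegral_finsetSum _ hm]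
        congr 1; ext z
        rw [Finset.sum_mul]
        refine Finset.sum_congr rfl fun i _ => ?_
        ring

/-- Interpolation between the sparse `A_r` bound and the trivial `L¹ × L¹` bound. -/
lemma sparse_frac (D : DGrid ι μ d) (T : Finset ι) (σ u : Measure X) [SFinite σ] [SFinite u]
    {r θ p q' : ℝ} (hr : 1 < r) (hθ : 0 < θ) (hθ1 : θ < 1)
    (hp : 1 / p = 1 - θ + θ / r) (hq : 1 / q' = 1 - θ / r) {A : ℝ≥0∞} (hA : A ≠ ∞)
    (hσ : ∀ i ∈ T, σ (D.S i) ≠ ∞) (hu : ∀ i ∈ T, u (D.S i) ≠ ∞)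
    (hH : ∀ E, MeasurableSet E → μ E ≤ u E ^ (1 / r) * σ E ^ (1 - 1 / r))
    (hAr : ∀ i ∈ T, u (D.S i) * σ (D.S i) ^ (r - 1) ≤ A * μ (D.S i) ^ r)
    (hsp : ∀ i ∈ T, μ (D.S i) ≤ 2 * μ (D.ex T i))
    (f g : X → ℝ≥0∞) (hf : Measurable f) (hg : Measurable g) :
    ∑ i ∈ T, μ (D.S i) ^ (-θ) * ((∫⁻ x in D.S i, f x ∂σ) * ∫⁻ x in D.S i, g x ∂u) ≤
      geomC (d * θ) * (ArC r ^ θ * A ^ (θ * max 1 (1 / (r - 1)))) *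
        ((∫⁻ x, f x ^ p ∂σ) ^ (1 / p) * (∫⁻ x, g x ^ q' ∂u) ^ (1 / q')) := by
  have hr0 : 0 < r := by linarith
  have hr1 : 0 < r - 1 := by linarith
  have hi0 : 0 < 1 / r := by positivity
  have hi1 : 1 / r < 1 := by rw [div_lt_one (by linarith)]; linarith
  have htr : θ / r = θ * (1 / r) := by ring
  have hp0 : 0 < p := by
    rw [← one_div_pos, hp]; have : 0 < θ / r := by positivity
    linarith
  have hq0 : 0 < q' := by
    rw [← one_div_pos, hq, htr]; nlinarith
  set K : X × X → ℝ≥0∞ := fun z => ∑ i ∈ T, (μ (D.S i))⁻¹ * (D.ind i z.1 * D.ind i z.2) with hK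
  have hKm : Measurable K := by
    refine Finset.measurable_fun_sum _ fun i _ => ?_
    have h1 : Measurable (fun z : X × X => D.ind i z.1) := (D.measurable_ind i).comp measurable_fst
    have h2 : Measurable (fun z : X × X => D.ind i z.2) := (D.measurable_ind i).comp measurable_snd
    exact (h1.mul h2).const_mul _
  have hFm : Measurable (fun x => f x ^ p) := hf.pow_const p
  have hGm : Measurable (fun x => g x ^ q') := hg.pow_const q'
  have hF1 : Measurable (fun z : X × X => f z.1 ^ p) := hFm.comp measurable_fst
  have hG2 : Measurable (fun z : X × X => g z.2 ^ q') := hGm.comp measurable_snd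
  have hF1' : Measurable (fun z : X × X => (f z.1 ^ p) ^ (1 / r)) := hF1.pow_const _
  have hG2' : Measurable (fun z : X × X => (g z.2 ^ q') ^ (1 - 1 / r)) := hG2.pow_const _
  have hfF : ∀ x, f x = (f x ^ p) ^ (1 - θ) * ((f x ^ p) ^ (1 / r)) ^ θ := by
    intro x
    rw [← ENNReal.rpow_mul (f x ^ p) (1 / r) θ,
      ← ENNReal.rpow_add_of_nonneg _ _ (by linarith) (by positivity), ← ENNReal.rpow_mul]
    have : p * (1 - θ + 1 / r * θ) = 1 := by
      have h2 : 1 - θ + 1 / r * θ = 1 / p := by rw [hp]; ring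
      rw [h2]; field_simp
    rw [this, ENNReal.rpow_one]
  have hgG : ∀ x, g x = (g x ^ q') ^ (1 - θ) * ((g x ^ q') ^ (1 - 1 / r)) ^ θ := by
    intro x
    rw [← ENNReal.rpow_mul (g x ^ q') (1 - 1 / r) θ,
      ← ENNReal.rpow_add_of_nonneg _ _ (by linarith) (mul_nonneg (by linarith) hθ.le),
      ← ENNReal.rpow_mul]
    have : q' * (1 - θ + (1 - 1 / r) * θ) = 1 := by
      have h2 : 1 - θ + (1 - 1 / r) * θ = 1 / q' := by rw [hq]; ring
      rw [h2]; field_simp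
    rw [this, ENNReal.rpow_one]
  -- split the double integral by Hölder with exponents `1 / (1 - θ)` and `1 / θ`
  rw [D.form_eq T σ u _ f g hf hg]
  calc _ ≤ ∫⁻ z, geomC (d * θ) * ((f z.1 ^ p * g z.2 ^ q') ^ (1 - θ) *
          (K z * ((f z.1 ^ p) ^ (1 / r) * (g z.2 ^ q') ^ (1 - 1 / r))) ^ θ) ∂(σ.prod u) := by
        refine lintegral_mono fun z => ?_
        refine (mul_le_mul_left (D.kernel_le T hθ z.1 z.2) _).trans (le_of_eq ?_)
        rw [ENNReal.mul_rpow_of_nonneg _ _ (by linarith : 0 ≤ 1 - θ),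
          ENNReal.mul_rpow_of_nonneg _ _ hθ.le, ENNReal.mul_rpow_of_nonneg _ _ hθ.le]
        nth_rewrite 1 [hfF z.1, hgG z.2]
        ring
    _ = geomC (d * θ) * ∫⁻ z, (f z.1 ^ p * g z.2 ^ q') ^ (1 - θ) *
          (K z * ((f z.1 ^ p) ^ (1 / r) * (g z.2 ^ q') ^ (1 - 1 / r))) ^ θ ∂(σ.prod u) := by
        rw [lintegral_const_mul]
        exact ((hF1.mul hG2).pow_const _).mul ((hKm.mul (hF1'.mul hG2')).pow_const _)
    _ ≤ geomC (d * θ) * ((∫⁻ z, f z.1 ^ p * g z.2 ^ q' ∂(σ.prod u)) ^ (1 - θ) *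
          (∫⁻ z, K z * ((f z.1 ^ p) ^ (1 / r) * (g z.2 ^ q') ^ (1 - 1 / r)) ∂(σ.prod u)) ^ θ) := by
        gcongr
        exact ENNReal.lintegral_mul_norm_pow_le (hF1.mul hG2).aemeasurable
          (hKm.mul (hF1'.mul hG2')).aemeasurable (by linarith) hθ.le (by ring)
    _ ≤ geomC (d * θ) * (((∫⁻ x, f x ^ p ∂σ) * ∫⁻ x, g x ^ q' ∂u) ^ (1 - θ) *
          (ArC r * A ^ (max 1 (1 / (r - 1))) *
            ((∫⁻ x, f x ^ p ∂σ) ^ (1 / r) * (∫⁻ x, g x ^ q' ∂u) ^ (1 - 1 / r))) ^ θ) := by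
        gcongr ?_ * (?_ ^ _ * ?_ ^ _)
        · exact le_rfl
        · rw [lintegral_prod_mul hFm.aemeasurable hGm.aemeasurable]
        · rw [hK, ← D.form_eq T σ u (fun i => (μ (D.S i))⁻¹) (fun x => (f x ^ p) ^ (1 / r))
            (fun x => (g x ^ q') ^ (1 - 1 / r)) (hFm.pow_const _) (hGm.pow_const _)]
          refine (D.sparse_Ar T σ u hr hA hσ hu hH hAr hsp _ _ (hFm.pow_const _)
            (hGm.pow_const _)).trans (le_of_eq ?_)
          congr 4
          · ext x
            rw [← ENNReal.rpow_mul, one_div_mul_cancel hr0.ne', ENNReal.rpow_one]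
          · ext x
            have : (1 - 1 / r) * (r / (r - 1)) = 1 := by field_simp
            rw [← ENNReal.rpow_mul, this, ENNReal.rpow_one]
    _ = _ := by
        have e1 : 1 / p = (1 - θ) + (1 / r) * θ := by rw [hp]; ring
        have e2 : 1 / q' = (1 - θ) + (1 - 1 / r) * θ := by rw [hq]; ring
        rw [e1, e2, ENNReal.rpow_add_of_nonneg _ _ (by linarith) (by positivity),
          ENNReal.rpow_add_of_nonneg _ _ (by linarith) (mul_nonneg (by linarith) hθ.le),
          ENNReal.rpow_mul _ (1 / r) θ, ENNReal.rpow_mul _ (1 - 1 / r) θ,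
          ENNReal.mul_rpow_of_nonneg _ _ (by linarith : 0 ≤ 1 - θ),
          ENNReal.mul_rpow_of_nonneg _ _ hθ.le, ENNReal.mul_rpow_of_nonneg _ _ hθ.le,
          ENNReal.mul_rpow_of_nonneg _ _ hθ.le, mul_comm θ (max _ _), ENNReal.rpow_mul _ _ θ]
        ring

end DGrid

/-! ### Two-weight bound for dyadic fractional operators -/

namespace DGrid

variable {X : Type*} [MeasurableSpace X] {ι : Type*} {μ : Measure X} {d : ℝ}

/-- A fractional form over a finite family is dominated by the same form over a subfamily of
principal cubes: the cubes attached to one principal cube have comparable averages, and for each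
point they contribute a geometric series. -/
lemma form_le_principal (D : DGrid ι μ d) (G T : Finset ι) (u : Measure X) {θ : ℝ}
    (F : ι → ℝ≥0∞)
    (hdom : ∀ i ∈ G, ∃ j ∈ T, D.lev i ≤ D.lev j ∧ D.S i ⊆ D.S j ∧
      F i / μ (D.S i) ≤ 2 * (F j / μ (D.S j)))
    (g : X → ℝ≥0∞) (hg : Measurable g) :
    ∑ i ∈ G, μ (D.S i) ^ (-θ) * (F i * ∫⁻ x in D.S i, g x ∂u) ≤
      2 * geomC (d * (1 - θ)) *
        ∑ j ∈ T, μ (D.S j) ^ (-θ) * (F j * ∫⁻ x in D.S j, g x ∂u) := by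
  classical
  choose! P hPT hlev hsub hav using hdom
  have hF : ∀ i, μ (D.S i) ^ (-θ) * F i = μ (D.S i) ^ (1 - θ) * (F i / μ (D.S i)) := by
    intro i
    have : μ (D.S i) ^ (-θ) = μ (D.S i) ^ (1 - θ) * (μ (D.S i))⁻¹ := by
      rw [← ENNReal.rpow_neg_one, ← ENNReal.rpow_add _ _ (D.vol_ne_zero i) (D.vol_ne_top i)]
      ring_nf
    rw [this, ENNReal.div_eq_inv_mul, mul_assoc]
  rw [← Finset.sum_fiberwise_of_maps_to hPT, Finset.mul_sum]
  refine Finset.sum_le_sum fun j _ => ?_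
  set Z := G.filter (fun i => P i = j) with hZ
  have hmZ : ∀ i ∈ Z, Measurable (fun x => μ (D.S i) ^ (1 - θ) * (D.ind i x * g x)) :=
    fun i _ => ((D.measurable_ind i).mul hg).const_mul _
  calc ∑ i ∈ Z, μ (D.S i) ^ (-θ) * (F i * ∫⁻ x in D.S i, g x ∂u)
      ≤ ∑ i ∈ Z, (2 * (F j / μ (D.S j))) *
          ∫⁻ x, μ (D.S i) ^ (1 - θ) * (D.ind i x * g x) ∂u := by
        refine Finset.sum_le_sum fun i hi => ?_
        obtain ⟨hiG, rfl⟩ := Finset.mem_filter.1 hi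
        rw [lintegral_const_mul (f := fun x => D.ind i x * g x) _ ((D.measurable_ind i).mul hg),
          D.lintegral_ind_mul, ← mul_assoc, hF, ← mul_assoc, mul_comm (2 * _)]
        gcongr
        exact hav i hiG
    _ = (2 * (F j / μ (D.S j))) *
          ∫⁻ x, ∑ i ∈ Z, μ (D.S i) ^ (1 - θ) * (D.ind i x * g x) ∂u := by
        rw [lintegral_finsetSum _ hmZ, Finset.mul_sum]
    _ ≤ (2 * (F j / μ (D.S j))) *
          ∫⁻ x, geomC (d * (1 - θ)) * μ (D.S j) ^ (1 - θ) * (D.ind j x * g x) ∂u := by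
        gcongr with x
        have hsx : ∑ i ∈ Z, μ (D.S i) ^ (1 - θ) * (D.ind i x * g x) =
            (∑ i ∈ Z.filter (fun i => x ∈ D.S i), (2 : ℝ≥0∞) ^ (d * (1 - θ) * D.lev i)) * g x := by
          rw [Finset.sum_filter (fun i => x ∈ D.S i), Finset.sum_mul]
          refine Finset.sum_congr rfl fun i _ => ?_
          split_ifs with h
          · rw [D.ind_of_mem h, D.vol, ← ENNReal.rpow_mul, one_mul]
            ring_nf
          · simp [D.ind_of_notMem h]
        rw [hsx]
        by_cases hx : x ∈ D.S j
        · rw [D.ind_of_mem hx, one_mul]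
          gcongr
          refine (D.sum_chain_le _ x (fun i hi => (Finset.mem_filter.1 hi).2) (D.lev j) ?_ _).trans
            (le_of_eq ?_)
          · intro i hi
            obtain ⟨hiG, rfl⟩ := Finset.mem_filter.1 (Finset.mem_filter.1 hi).1
            exact hlev i hiG
          · rw [D.vol, ← ENNReal.rpow_mul]; ring_nf
        · rw [Finset.filter_false_of_mem]
          · simp
          · intro i hi hxi
            obtain ⟨hiG, rfl⟩ := Finset.mem_filter.1 hi
            exact hx (hsub i hiG hxi)
    _ = _ := by
        rw [lintegral_const_mul (f := fun x => D.ind j x * g x) _ ((D.measurable_ind j).mul hg),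
          D.lintegral_ind_mul, ← mul_assoc (μ (D.S j) ^ (-θ)), hF]
        ring

/-- The constant in the two-weight fractional bound. -/
def fracC (d r θ : ℝ) : ℝ≥0∞ := 2 * geomC (d * (1 - θ)) * (geomC (d * θ) * ArC r ^ θ)

lemma fracC_ne_top {d r θ : ℝ} (hd : 0 < d) (hr : 1 < r) (hθ : 0 < θ) (hθ1 : θ < 1) :
    fracC d r θ ≠ ∞ := by
  have h1 := geomC_ne_top (s := d * (1 - θ)) (mul_pos hd (by linarith))
  have h2 := geomC_ne_top (s := d * θ) (mul_pos hd hθ)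
  exact ENNReal.mul_ne_top (ENNReal.mul_ne_top (by norm_num) h1)
    (ENNReal.mul_ne_top h2 (ENNReal.rpow_ne_top_of_nonneg hθ.le (ArC_ne_top hr)))

/-- The bilinear form of the fractional operator over any finite family: principal cubes reduce it
to a sparse family. Cubes on which `f` has zero integral are dropped first, as sparseness needs
positive averages. -/
lemma form_frac (D : DGrid ι μ d) (G : Finset ι) (σ u : Measure X) [SFinite σ] [SFinite u]
    {r θ p q' : ℝ} (hr : 1 < r) (hθ : 0 < θ) (hθ1 : θ < 1)
    (hp : 1 / p = 1 - θ + θ / r) (hq : 1 / q' = 1 - θ / r) {A : ℝ≥0∞} (hA : A ≠ ∞)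
    (hσ : ∀ i, σ (D.S i) ≠ ∞) (hu : ∀ i, u (D.S i) ≠ ∞)
    (hH : ∀ E, MeasurableSet E → μ E ≤ u E ^ (1 / r) * σ E ^ (1 - 1 / r))
    (hAr : ∀ i, u (D.S i) * σ (D.S i) ^ (r - 1) ≤ A * μ (D.S i) ^ r)
    (f g : X → ℝ≥0∞) (hf : Measurable f) (hg : Measurable g)
    (hfi : ∀ i, ∫⁻ x in D.S i, f x ∂σ ≠ ∞) :
    ∑ i ∈ G, μ (D.S i) ^ (-θ) * ((∫⁻ x in D.S i, f x ∂σ) * ∫⁻ x in D.S i, g x ∂u) ≤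
      fracC d r θ * A ^ (θ * max 1 (1 / (r - 1))) *
        ((∫⁻ x, f x ^ p ∂σ) ^ (1 / p) * (∫⁻ x, g x ^ q' ∂u) ^ (1 / q')) := by
  classical
  set G' := G.filter (fun i => ∫⁻ x in D.S i, f x ∂σ ≠ 0) with hG'
  have e : ∑ i ∈ G, μ (D.S i) ^ (-θ) * ((∫⁻ x in D.S i, f x ∂σ) * ∫⁻ x in D.S i, g x ∂u) =
      ∑ i ∈ G', μ (D.S i) ^ (-θ) * ((∫⁻ x in D.S i, f x ∂σ) * ∫⁻ x in D.S i, g x ∂u) := by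
    rw [hG', Finset.sum_filter]
    refine Finset.sum_congr rfl fun i _ => ?_
    split_ifs with h
    · rfl
    · simp [not_not.1 h]
  rw [e]
  set ν := σ.withDensity f with hν
  have hνS : ∀ i, ν (D.S i) = ∫⁻ x in D.S i, f x ∂σ := fun i => withDensity_apply _ (D.meas i)
  obtain ⟨T, hTG, hdom, hT⟩ := D.exists_principal
    (fun i => (∫⁻ x in D.S i, f x ∂σ) / μ (D.S i)) G'
  have hsp := D.sparse T ν (fun i hi => by
      rw [hνS]; exact (Finset.mem_filter.1 (hTG hi)).2) (fun i _ => by rw [hνS]; exact hfi i)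
      (by simpa only [hνS] using hT)
  refine (D.form_le_principal G' T u _ hdom g hg).trans ?_
  refine (mul_le_mul_right (D.sparse_frac T σ u hr hθ hθ1 hp hq hA (fun i _ => hσ i)
    (fun i _ => hu i) hH (fun i _ => hAr i) hsp f g hf hg) _).trans (le_of_eq ?_)
  unfold fracC
  ring

/-- The positive dyadic fractional operator over a finite family of cubes. -/
def fop (D : DGrid ι μ d) (G : Finset ι) (θ : ℝ) (F : ι → ℝ≥0∞) (y : X) : ℝ≥0∞ :=
  ∑ i ∈ G, μ (D.S i) ^ (-θ) * F i * D.ind i y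

lemma measurable_fop (D : DGrid ι μ d) (G : Finset ι) (θ : ℝ) (F : ι → ℝ≥0∞) :
    Measurable (D.fop G θ F) :=
  Finset.measurable_fun_sum _ fun i _ => (D.measurable_ind i).const_mul _

/-- A priori finiteness, which allows dividing by a power of the norm in the duality argument. -/
lemma lintegral_fop_ne_top (D : DGrid ι μ d) (G : Finset ι) (θ : ℝ) (F : ι → ℝ≥0∞)
    (hF : ∀ i, F i ≠ ∞) (u : Measure X) (hu : ∀ i, u (D.S i) ≠ ∞) {q : ℝ} (hq : 0 < q) :
    ∫⁻ y, D.fop G θ F y ^ q ∂u ≠ ∞ := by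
  set C : ℝ≥0∞ := ∑ i ∈ G, μ (D.S i) ^ (-θ) * F i with hC
  have hCt : C ≠ ∞ := by
    refine ENNReal.sum_ne_top.2 fun i _ => ENNReal.mul_ne_top ?_ (hF i)
    exact ENNReal.rpow_ne_top_of_ne_zero (D.vol_ne_zero i) (D.vol_ne_top i)
  have hle : ∀ y, D.fop G θ F y ^ q ≤ C ^ q * ∑ i ∈ G, D.ind i y := by
    intro y
    by_cases h : ∃ i ∈ G, y ∈ D.S i
    · obtain ⟨i, hi, hy⟩ := h
      have h1 : (1 : ℝ≥0∞) ≤ ∑ i ∈ G, D.ind i y :=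
        (D.ind_of_mem hy).symm.le.trans
          (Finset.single_le_sum (f := fun i => D.ind i y) (fun _ _ => zero_le) hi)
      have h2 : D.fop G θ F y ≤ C := by
        refine Finset.sum_le_sum fun i _ => ?_
        refine (mul_le_mul_right (?_ : D.ind i y ≤ 1) _).trans (by rw [mul_one])
        by_cases h : y ∈ D.S i
        · rw [D.ind_of_mem h]
        · rw [D.ind_of_notMem h]; exact zero_le
      calc _ ≤ C ^ q * 1 := by rw [mul_one]; gcongr
        _ ≤ _ := by gcongr
    · push Not at h
      have : D.fop G θ F y = 0 := Finset.sum_eq_zero fun i hi => by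
        rw [D.ind_of_notMem (h i hi), mul_zero]
      rw [this, ENNReal.zero_rpow_of_pos hq]
      exact zero_le
  refine ((lintegral_mono hle).trans_lt ?_).ne
  rw [lintegral_const_mul _ (Finset.measurable_fun_sum _ fun i _ => D.measurable_ind i),
    lintegral_finsetSum _ fun i _ => D.measurable_ind i]
  refine ENNReal.mul_lt_top (ENNReal.rpow_lt_top_of_nonneg hq.le hCt) ?_
  refine ENNReal.sum_lt_top.2 fun i _ => ?_
  have := D.lintegral_ind_mul i u (fun _ => 1)
  simp only [mul_one, lintegral_one, Measure.restrict_apply_univ] at this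
  rw [this]
  exact (hu i).lt_top

/-- Weighted bound for the dyadic fractional operator over a finite family, by duality. -/
lemma fop_bound (D : DGrid ι μ d) (G : Finset ι) (σ u : Measure X) [SFinite σ] [SFinite u]
    {r θ p q : ℝ} (hr : 1 < r) (hθ : 0 < θ) (hθ1 : θ < 1)
    (hp : 1 / p = 1 - θ + θ / r) (hq : 1 / q = θ / r) {A : ℝ≥0∞} (hA : A ≠ ∞)
    (hσ : ∀ i, σ (D.S i) ≠ ∞) (hu : ∀ i, u (D.S i) ≠ ∞)
    (hH : ∀ E, MeasurableSet E → μ E ≤ u E ^ (1 / r) * σ E ^ (1 - 1 / r))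
    (hAr : ∀ i, u (D.S i) * σ (D.S i) ^ (r - 1) ≤ A * μ (D.S i) ^ r)
    (f : X → ℝ≥0∞) (hf : Measurable f) (hfi : ∀ i, ∫⁻ x in D.S i, f x ∂σ ≠ ∞) :
    (∫⁻ y, D.fop G θ (fun i => ∫⁻ x in D.S i, f x ∂σ) y ^ q ∂u) ^ (1 / q) ≤
      fracC d r θ * A ^ (θ * max 1 (1 / (r - 1))) * (∫⁻ x, f x ^ p ∂σ) ^ (1 / p) := by
  have hr0 : 0 < r := by linarith
  have hq0 : 0 < q := by rw [← one_div_pos, hq]; positivity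
  have hq1' : 1 / q < 1 := by rw [hq, div_lt_one hr0]; linarith
  have hq1 : 1 < q := by rwa [div_lt_one hq0] at hq1'
  set t := D.fop G θ (fun i => ∫⁻ x in D.S i, f x ∂σ) with ht
  have htm : Measurable t := D.measurable_fop _ _ _
  set N := ∫⁻ y, t y ^ q ∂u with hN
  have hNt : N ≠ ∞ := D.lintegral_fop_ne_top G θ _ hfi u hu hq0
  set K := fracC d r θ * A ^ (θ * max 1 (1 / (r - 1))) * (∫⁻ x, f x ^ p ∂σ) ^ (1 / p) with hK
  have hq' : 1 / (1 / (1 - θ / r)) = 1 - θ / r := one_div_one_div _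
  -- test the bilinear form against `t ^ (q - 1)`
  have hmain : N ≤ K * N ^ (1 - 1 / q) := by
    have hbil := D.form_frac G σ u hr hθ hθ1 hp hq' hA hσ hu hH hAr f (fun y => t y ^ (q - 1)) hf
      (htm.pow_const _) hfi
    have e1 : N = ∑ i ∈ G, μ (D.S i) ^ (-θ) *
        ((∫⁻ x in D.S i, f x ∂σ) * ∫⁻ x in D.S i, t x ^ (q - 1) ∂u) := by
      calc N = ∫⁻ y, ∑ i ∈ G, (μ (D.S i) ^ (-θ) * (∫⁻ x in D.S i, f x ∂σ)) *
            (D.ind i y * t y ^ (q - 1)) ∂u := by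
            refine lintegral_congr fun y => ?_
            have : t y ^ q = t y * t y ^ (q - 1) := by
              nth_rewrite 2 [← ENNReal.rpow_one (t y)]
              rw [← ENNReal.rpow_add_of_nonneg _ _ (by norm_num) (by linarith)]
              ring_nf
            rw [this]
            nth_rewrite 1 [ht]
            unfold fop
            rw [Finset.sum_mul]
            exact Finset.sum_congr rfl fun i _ => by ring
        _ = _ := by
            have hm : ∀ i ∈ G, Measurable (fun y => (μ (D.S i) ^ (-θ) *
                (∫⁻ x in D.S i, f x ∂σ)) * (D.ind i y * t y ^ (q - 1))) := fun i _ =>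
              ((D.measurable_ind i).mul (htm.pow_const _)).const_mul _
            rw [lintegral_finsetSum _ hm]
            refine Finset.sum_congr rfl fun i _ => ?_
            rw [lintegral_const_mul (f := fun y => D.ind i y * t y ^ (q - 1)) _
              ((D.measurable_ind i).mul (htm.pow_const _)), D.lintegral_ind_mul, mul_assoc]
    have e2 : ∀ x, (t x ^ (q - 1)) ^ (1 / (1 - θ / r)) = t x ^ q := by
      intro x
      rw [← ENNReal.rpow_mul]
      congr 1
      rw [← hq]
      have : q - 1 ≠ 0 := by linarith
      field_simp
    rw [← e1] at hbil
    simp only [e2] at hbil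
    rw [hq', ← hq] at hbil
    refine hbil.trans (le_of_eq ?_)
    rw [hK]; ring
  rcases eq_or_ne N 0 with h0 | h0
  · rw [h0, ENNReal.zero_rpow_of_pos (by positivity)]; exact zero_le
  have hs : N = N ^ (1 / q) * N ^ (1 - 1 / q) := by
    rw [← ENNReal.rpow_add_of_nonneg _ _ (by positivity) (by linarith)]
    simp
  have h1 : N ^ (1 - 1 / q) ≠ 0 := by
    rw [Ne, ENNReal.rpow_eq_zero_iff]; simp [h0, hNt]
  have h2 : N ^ (1 - 1 / q) ≠ ∞ := ENNReal.rpow_ne_top_of_nonneg (by linarith) hNt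
  have h3 : N ^ (1 / q) * N ^ (1 - 1 / q) ≤ K * N ^ (1 - 1 / q) := hs.symm.le.trans hmain
  exact (ENNReal.mul_le_mul_iff_left h1 h2).1 h3

/-- Weighted bound for the full dyadic fractional operator, by monotone convergence. -/
lemma fop_tsum_bound [Countable ι] (D : DGrid ι μ d) (σ u : Measure X) [SFinite σ] [SFinite u]
    {r θ p q : ℝ} (hr : 1 < r) (hθ : 0 < θ) (hθ1 : θ < 1)
    (hp : 1 / p = 1 - θ + θ / r) (hq : 1 / q = θ / r) {A : ℝ≥0∞} (hA : A ≠ ∞)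
    (hσ : ∀ i, σ (D.S i) ≠ ∞) (hu : ∀ i, u (D.S i) ≠ ∞)
    (hH : ∀ E, MeasurableSet E → μ E ≤ u E ^ (1 / r) * σ E ^ (1 - 1 / r))
    (hAr : ∀ i, u (D.S i) * σ (D.S i) ^ (r - 1) ≤ A * μ (D.S i) ^ r)
    (f : X → ℝ≥0∞) (hf : Measurable f) (hfi : ∀ i, ∫⁻ x in D.S i, f x ∂σ ≠ ∞) :
    (∫⁻ y, (∑' i, μ (D.S i) ^ (-θ) * (∫⁻ x in D.S i, f x ∂σ) * D.ind i y) ^ q ∂u) ^ (1 / q) ≤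
      fracC d r θ * A ^ (θ * max 1 (1 / (r - 1))) * (∫⁻ x, f x ^ p ∂σ) ^ (1 / p) := by
  classical
  have hr0 : 0 < r := by linarith
  have hq0 : 0 < q := by rw [← one_div_pos, hq]; positivity
  have e : ∀ y, (∑' i, μ (D.S i) ^ (-θ) * (∫⁻ x in D.S i, f x ∂σ) * D.ind i y) ^ q =
      ⨆ G : Finset ι, D.fop G θ (fun i => ∫⁻ x in D.S i, f x ∂σ) y ^ q := by
    intro y
    rw [ENNReal.tsum_eq_iSup_sum]
    exact (ENNReal.orderIsoRpow q hq0).map_iSup _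
  simp only [e]
  rw [lintegral_iSup_directed]
  · have : (⨆ G : Finset ι, ∫⁻ y, D.fop G θ (fun i => ∫⁻ x in D.S i, f x ∂σ) y ^ q ∂u) ^ (1 / q)
        = ⨆ G : Finset ι, (∫⁻ y, D.fop G θ (fun i => ∫⁻ x in D.S i, f x ∂σ) y ^ q ∂u) ^ (1 / q) :=
      (ENNReal.orderIsoRpow (1 / q) (by positivity)).map_iSup _
    rw [this]
    exact iSup_le fun G => D.fop_bound G σ u hr hθ hθ1 hp hq hA hσ hu hH hAr f hf hfi
  · exact fun G => ((D.measurable_fop _ _ _).pow_const _).aemeasurable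
  · refine Monotone.directed_le fun G G' h y => ?_
    have : D.fop G θ (fun i => ∫⁻ x in D.S i, f x ∂σ) y ≤
        D.fop G' θ (fun i => ∫⁻ x in D.S i, f x ∂σ) y :=
      Finset.sum_le_sum_of_subset h
    dsimp only
    gcongr

end DGrid

/-! ### Shifted dyadic grids of `ℝⁿ` -/

/-- The shift of a one-dimensional grid, as an integer. -/
def bit (t : Bool) : ℤ := if t then 1 else 0

/-- The index of the interval of level `j`, in the one-dimensional grid with shift `t`,
containing `x`. -/
def gidx (t : Bool) (j : ℤ) (x : ℝ) : ℤ := ⌊x / 2 ^ j - (-1) ^ j * bit t / 3⌋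

lemma gidx_succ (t : Bool) (j : ℤ) :
    ∃ m : ℤ, ∀ y, gidx t (j + 1) y = (gidx t j y + m) / 2 := by
  obtain ⟨e, he⟩ : ∃ e : ℤ, (e : ℝ) = (-1) ^ j := by
    rcases Int.even_or_odd j with h | h
    · exact ⟨1, by simp [h.neg_one_zpow]⟩
    · exact ⟨-1, by simp [h.neg_one_zpow]⟩
  refine ⟨e * bit t, fun y => ?_⟩
  unfold gidx
  rw [← Int.floor_add_intCast]
  have h2 : (2 : ℝ) ^ (j + 1) = 2 ^ j * 2 := zpow_add_one₀ (by norm_num) j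
  have h3 : (-1 : ℝ) ^ (j + 1) = (-1) ^ j * (-1) := zpow_add_one₀ (by norm_num) j
  have h4 : y / 2 ^ (j + 1) - (-1 : ℝ) ^ (j + 1) * bit t / 3 =
      (y / 2 ^ j - (-1) ^ j * bit t / 3 + ((e * bit t : ℤ) : ℝ)) / ((2 : ℕ) : ℝ) := by
    rw [h2, h3]; push_cast; rw [he]
    have : (2 : ℝ) ^ j ≠ 0 := by positivity
    field_simp
    ring
  rw [h4, Int.floor_div_natCast]
  rfl

lemma gidx_mono_level (t : Bool) {j j' : ℤ} (h : j ≤ j') {x y : ℝ} (hxy : gidx t j x = gidx t j y) :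
    gidx t j' x = gidx t j' y := by
  induction j', h using Int.leInduction with
  | base => exact hxy
  | succ k _ ih =>
    obtain ⟨m, hm⟩ := gidx_succ t k
    rw [hm, hm, ih]

/-- The left end point of an interval of the grid. -/
def gleft (t : Bool) (j k : ℤ) : ℝ := 2 ^ j * (k + (-1) ^ j * bit t / 3)

lemma gidx_eq_iff (t : Bool) (j k : ℤ) (x : ℝ) :
    gidx t j x = k ↔ x ∈ Ico (gleft t j k) (gleft t j k + 2 ^ j) := by
  have h2 : (0 : ℝ) < 2 ^ j := by positivity
  unfold gidx gleft
  rw [Int.floor_eq_iff, mem_Ico]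
  constructor
  · rintro ⟨h, h'⟩
    rw [le_sub_iff_add_le, le_div_iff₀ h2] at h
    rw [sub_lt_iff_lt_add, div_lt_iff₀ h2] at h'
    constructor <;> nlinarith
  · rintro ⟨h, h'⟩
    rw [le_sub_iff_add_le, le_div_iff₀ h2, sub_lt_iff_lt_add, div_lt_iff₀ h2]
    constructor <;> nlinarith

lemma floor_third {a b : ℝ} (hab : a ≤ b) (hba : b - a ≤ 1 / 4) {e : ℝ} (he : e = 1 ∨ e = -1) :
    ⌊a⌋ = ⌊b⌋ ∨ ⌊a - e / 3⌋ = ⌊b - e / 3⌋ := by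
  by_cases h : ⌊a⌋ = ⌊b⌋
  · exact Or.inl h
  right
  have hlt : ⌊a⌋ < ⌊b⌋ := lt_of_le_of_ne (Int.floor_mono hab) h
  have h1 : a < ⌊b⌋ := Int.floor_lt.1 hlt
  have h2 : (⌊b⌋ : ℝ) ≤ b := Int.floor_le b
  rcases he with rfl | rfl
  · have e1 : ⌊a - 1 / 3⌋ = ⌊b⌋ - 1 := by
      rw [Int.floor_eq_iff]; push_cast; constructor <;> linarith
    have e2 : ⌊b - 1 / 3⌋ = ⌊b⌋ - 1 := by
      rw [Int.floor_eq_iff]; push_cast; constructor <;> linarith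
    rw [e1, e2]
  · have e1 : ⌊a - -1 / 3⌋ = ⌊b⌋ := by
      rw [Int.floor_eq_iff]; constructor <;> linarith
    have e2 : ⌊b - -1 / 3⌋ = ⌊b⌋ := by
      rw [Int.floor_eq_iff]; constructor <;> linarith
    rw [e1, e2]

/-- The one-third trick: an interval of length `2 * 2 ^ j` lies in an interval of level `j + 3` of
one of the two grids. -/
lemma exists_gidx (j : ℤ) (x : ℝ) :
    ∃ t : Bool, ∀ y, |y - x| ≤ 2 ^ j → gidx t (j + 3) y = gidx t (j + 3) x := by
  have h2 : (0 : ℝ) < 2 ^ j := by positivity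
  have h3 : (2 : ℝ) ^ (j + 3) = 2 ^ j * 8 := by
    rw [zpow_add₀ (by norm_num)]; norm_num
  have he : ((-1 : ℝ) ^ (j + 3)) = 1 ∨ ((-1 : ℝ) ^ (j + 3)) = -1 := by
    rcases Int.even_or_odd (j + 3) with h | h
    · exact Or.inl h.neg_one_zpow
    · exact Or.inr h.neg_one_zpow
  have key : ∃ t : Bool, gidx t (j + 3) (x - 2 ^ j) = gidx t (j + 3) (x + 2 ^ j) := by
    rcases floor_third (a := (x - 2 ^ j) / 2 ^ (j + 3)) (b := (x + 2 ^ j) / 2 ^ (j + 3))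
      (by gcongr; linarith) (by rw [h3]; field_simp; linarith) he with h | h
    · exact ⟨false, by simpa [gidx, bit] using h⟩
    · exact ⟨true, by simpa [gidx, bit] using h⟩
  obtain ⟨t, ht⟩ := key
  have hmono : ∀ a b : ℝ, a ≤ b → gidx t (j + 3) a ≤ gidx t (j + 3) b := fun a b hab =>
    Int.floor_mono (by gcongr)
  have hall : ∀ y, |y - x| ≤ 2 ^ j → gidx t (j + 3) y = gidx t (j + 3) (x - 2 ^ j) := by
    intro y hy
    rw [abs_le] at hy
    have := hmono (x - 2 ^ j) y (by linarith)
    have := hmono y (x + 2 ^ j) (by linarith)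
    omega
  refine ⟨t, fun y hy => ?_⟩
  rw [hall y hy, hall x (by simp [h2.le])]

/-- The volume of a box, given by its side lengths. -/
lemma volume_box {n : ℕ} (I : Fin n → Set ℝ) {h : ℝ}
    (hI : ∀ i, volume (I i) = ENNReal.ofReal h) :
    volume {x : En n | ∀ i, x i ∈ I i} = ENNReal.ofReal h ^ n := by
  have hp := (EuclideanSpace.volume_preserving_symm_measurableEquiv_toLp (Fin n))
  have e : {x : En n | ∀ i, x i ∈ I i} =
      (MeasurableEquiv.toLp 2 (Fin n → ℝ)).symm ⁻¹' (Set.univ.pi I) := by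
    ext x; simp [Set.mem_pi]
  rw [e, hp.measure_preimage_equiv, volume_pi_pi]
  simp [hI]

lemma measurableSet_box {n : ℕ} (I : Fin n → Set ℝ) (hI : ∀ i, MeasurableSet (I i)) :
    MeasurableSet {x : En n | ∀ i, x i ∈ I i} := by
  have : {x : En n | ∀ i, x i ∈ I i} = ⋂ i, (fun x : En n => x i) ⁻¹' I i := by ext x; simp
  rw [this]
  exact MeasurableSet.iInter fun i => (by fun_prop : Measurable fun x : En n => x i) (hI i)

lemma ofReal_two_zpow (j : ℤ) : ENNReal.ofReal ((2 : ℝ) ^ j) = 2 ^ (j : ℝ) := by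
  rw [← Real.rpow_intCast, ← ENNReal.ofReal_rpow_of_pos (by norm_num)]
  norm_num

/-- The dyadic grid of `ℝⁿ` with shift vector `t`. -/
def grid (n : ℕ) (t : Fin n → Bool) :
    DGrid (ℤ × (Fin n → ℤ)) (volume : Measure (En n)) (n : ℝ) where
  S := fun P => {x | ∀ i, gidx (t i) P.1 (x i) = P.2 i}
  lev := Prod.fst
  meas := by
    intro P
    simp only [gidx_eq_iff]
    exact measurableSet_box _ fun i => measurableSet_Ico
  vol := by
    intro P
    simp only [gidx_eq_iff]
    rw [volume_box (h := 2 ^ P.1) _ (by intro i; simp), ofReal_two_zpow, ← ENNReal.rpow_natCast,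
      ← ENNReal.rpow_mul, mul_comm]
  disj := by
    rintro ⟨j, k⟩ ⟨j', k'⟩ (rfl : j = j') hne
    refine Set.disjoint_left.2 fun x hx hx' => hne ?_
    have : k = k' := funext fun i => (hx i).symm.trans (hx' i)
    rw [this]
  nest := by
    rintro ⟨j, k⟩ ⟨j', k'⟩ (h : j < j')
    by_cases hd : Disjoint {x : En n | ∀ i, gidx (t i) j (x i) = k i}
      {x : En n | ∀ i, gidx (t i) j' (x i) = k' i}
    · exact Or.inl hd
    · right
      obtain ⟨z, hz, hz'⟩ := Set.not_disjoint_iff.1 hd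
      intro x hx i
      exact (gidx_mono_level (t i) h.le ((hx i).trans (hz i).symm)).trans (hz' i)

/-- A half-open grid cube lies in a closed cube of the same volume. -/
lemma grid_subset_cube (n : ℕ) (t : Fin n → Bool) (P : ℤ × (Fin n → ℤ)) :
    ∃ a : En n, (grid n t).S P ⊆ cube a (2 ^ P.1) ∧
      volume (cube a (2 ^ P.1)) = volume ((grid n t).S P) := by
  refine ⟨WithLp.toLp 2 fun i => gleft (t i) P.1 (P.2 i), fun x hx i => ?_, ?_⟩
  · have := (gidx_eq_iff _ _ _ _).1 (hx i)
    exact ⟨this.1, this.2.le⟩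
  · rw [volume_cube, (grid n t).vol, ofReal_two_zpow, ← ENNReal.rpow_natCast,
      ← ENNReal.rpow_mul, mul_comm]
    rfl

/-- The closed cube of centre `x` and side length `2ρ`. -/
def ccube {n : ℕ} (x : En n) (ρ : ℝ) : Set (En n) := {y | ∀ i, |y i - x i| ≤ ρ}

/-- Every cube centred at `x` lies, together with `x`, in a cube of comparable size of one of the `2^n`
shifted grids. -/
lemma exists_grid (n : ℕ) (j : ℤ) (x : En n) :
    ∃ (t : Fin n → Bool) (k : Fin n → ℤ), x ∈ (grid n t).S (j + 3, k) ∧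
      ccube x (2 ^ j) ⊆ (grid n t).S (j + 3, k) := by
  choose t ht using fun i => exists_gidx j (x i)
  exact ⟨t, fun i => gidx (t i) (j + 3) (x i), fun i => rfl, fun y hy i => ht i _ (hy i)⟩

/-! ### The discrete Riesz potential -/

/-- The term of scale `2 ^ j` of the discrete potential. -/
def Jterm (n : ℕ) (g : En n → ℝ≥0∞) (j : ℤ) (x : En n) : ℝ≥0∞ :=
  2 ^ ((j : ℝ) * (1 - n)) * ∫⁻ y in ccube x (2 ^ j), g y

/-- A discrete version of the Riesz potential of order `1`. -/
def Jop (n : ℕ) (g : En n → ℝ≥0∞) (x : En n) : ℝ≥0∞ := ∑' j : ℤ, Jterm n g j x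

lemma Jterm_le_Jop (n : ℕ) (g : En n → ℝ≥0∞) (j : ℤ) (x : En n) : Jterm n g j x ≤ Jop n g x :=
  ENNReal.le_tsum j

lemma measurableSet_ccube {n : ℕ} (x : En n) (ρ : ℝ) : MeasurableSet (ccube x ρ) :=
  measurableSet_box (fun i => {y | |y - x i| ≤ ρ}) fun i =>
    measurableSet_le (by fun_prop) measurable_const

lemma ccube_eq_cube {n : ℕ} (x : En n) (ρ : ℝ) :
    ccube x ρ = cube (WithLp.toLp 2 fun i => x i - ρ) (2 * ρ) := by
  ext y
  refine forall_congr' fun i => ?_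
  rw [abs_le]
  constructor <;> rintro ⟨h1, h2⟩ <;> constructor <;> simp only at * <;> linarith

lemma volume_ccube {n : ℕ} (x : En n) (j : ℤ) :
    volume (ccube x (2 ^ j)) = 2 ^ (((j : ℝ) + 1) * n) := by
  have h : (2 : ℝ) * 2 ^ j = 2 ^ (j + 1) := by rw [zpow_add_one₀ (by norm_num), mul_comm]
  rw [ccube_eq_cube, volume_cube, h, ofReal_two_zpow, ← ENNReal.rpow_natCast, ← ENNReal.rpow_mul]
  push_cast; rfl

lemma measurableSet_ccube_rel (n : ℕ) (ρ : ℝ) :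
    MeasurableSet {z : En n × En n | z.2 ∈ ccube z.1 ρ} := by
  have : {z : En n × En n | z.2 ∈ ccube z.1 ρ} = ⋂ i, {z | |z.2 i - z.1 i| ≤ ρ} := by
    ext z; simp [ccube]
  rw [this]
  exact MeasurableSet.iInter fun i => measurableSet_le (by fun_prop) measurable_const

lemma measurable_Jterm (n : ℕ) (g : En n → ℝ≥0∞) (hg : Measurable g) (j : ℤ) :
    Measurable (Jterm n g j) := by
  refine Measurable.const_mul ?_ _
  have h : ∀ x, ∫⁻ y in ccube x (2 ^ j), g y =
      ∫⁻ y, {z : En n × En n | z.2 ∈ ccube z.1 (2 ^ j)}.indicator (fun z => g z.2) (x, y) := by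
    intro x
    rw [← lintegral_indicator (measurableSet_ccube x _)]
    rfl
  simp only [h]
  exact ((hg.comp measurable_snd).indicator (measurableSet_ccube_rel n _)).lintegral_prod_right'

lemma measurable_Jop (n : ℕ) (g : En n → ℝ≥0∞) (hg : Measurable g) : Measurable (Jop n g) :=
  Measurable.tsum fun j => measurable_Jterm n g hg j

/-! ### Domination by dyadic operators -/

/-- The full dyadic fractional operator of order `1` on the grid with shift `t`. -/
def dyFrac (n : ℕ) (t : Fin n → Bool) (g : En n → ℝ≥0∞) (x : En n) : ℝ≥0∞ :=
  ∑' P, volume ((grid n t).S P) ^ (-(((n : ℝ) - 1) / n)) * (∫⁻ y in (grid n t).S P, g y) *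
    (grid n t).ind P x

/-- The one-third trick bounds the potential by the dyadic operators of the `2^n` shifted grids. -/
lemma Jop_le_dyFrac (n : ℕ) (hn : 2 ≤ n) (g : En n → ℝ≥0∞) (x : En n) :
    Jop n g x ≤ 2 ^ (3 * ((n : ℝ) - 1)) * ∑ t, dyFrac n t g x := by
  have hn0 : (n : ℝ) ≠ 0 := by positivity
  set a : (Fin n → Bool) → ℤ × (Fin n → ℤ) → ℝ≥0∞ := fun t P =>
    volume ((grid n t).S P) ^ (-(((n : ℝ) - 1) / n)) * (∫⁻ y in (grid n t).S P, g y) *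
    (grid n t).ind P x with ha
  have hj : ∀ j : ℤ, Jterm n g j x ≤ 2 ^ (3 * ((n : ℝ) - 1)) * ∑ t, ∑' k, a t (j + 3, k) := by
    intro j
    obtain ⟨t, k, hx, hsub⟩ := exists_grid n j x
    have h1 : a t (j + 3, k) ≤ ∑ t, ∑' k, a t (j + 3, k) :=
      (ENNReal.le_tsum (f := fun k => a t (j + 3, k)) k).trans
        (Finset.single_le_sum (f := fun t => ∑' k, a t (j + 3, k)) (fun _ _ => zero_le)
          (Finset.mem_univ t))
    refine le_trans ?_ (mul_le_mul_right h1 _)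
    have e : (2 : ℝ≥0∞) ^ ((j : ℝ) * (1 - n)) = 2 ^ (3 * ((n : ℝ) - 1)) *
        volume ((grid n t).S (j + 3, k)) ^ (-(((n : ℝ) - 1) / n)) := by
      rw [(grid n t).vol, ← ENNReal.rpow_mul, ← two_rpow_add]
      congr 1
      have : (grid n t).lev (j + 3, k) = j + 3 := rfl
      rw [this]
      push_cast
      field_simp
      ring
    unfold Jterm
    simp only [ha]
    rw [(grid n t).ind_of_mem hx, mul_one, e, mul_assoc]
    gcongr
  calc Jop n g x ≤ ∑' j : ℤ, 2 ^ (3 * ((n : ℝ) - 1)) * ∑ t, ∑' k, a t (j + 3, k) :=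
        ENNReal.tsum_le_tsum hj
    _ = 2 ^ (3 * ((n : ℝ) - 1)) * ∑ t, ∑' j : ℤ, ∑' k, a t (j + 3, k) := by
        rw [ENNReal.tsum_mul_left, Summable.tsum_finsetSum fun _ _ => ENNReal.summable]
    _ = _ := by
        congr 1
        refine Finset.sum_congr rfl fun t _ => ?_
        have hsh : ∑' j : ℤ, ∑' k, a t (j + 3, k) = ∑' j : ℤ, ∑' k, a t (j, k) :=
          (Equiv.addRight (3 : ℤ)).tsum_eq (fun j => ∑' k, a t (j, k))
        rw [hsh]
        exact ENNReal.tsum_prod.symm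

/-! ### The maximal function of the potential -/

/-- The constant in the bound of the maximal function of the discrete potential. -/
def MJC (n : ℕ) : ℝ≥0∞ := 2 ^ ((n : ℝ) - 1) + 2 ^ (3 * (n : ℝ) - 1) * geomC 1

lemma MJC_ne_top (n : ℕ) : MJC n ≠ ∞ :=
  ENNReal.add_ne_top.2 ⟨two_rpow_ne_top _,
    ENNReal.mul_ne_top (two_rpow_ne_top _) (geomC_ne_top one_pos)⟩

/-- Averages of one scale of the potential over a cube of side about `2 ^ i` containing `x`: at scales
larger than the cube the term is essentially constant, and at smaller scales the average is a
geometrically decreasing multiple of the term of scale `2 ^ (i + 2)` at `x`. -/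
lemma avgE_Jterm_le (n : ℕ) (g : En n → ℝ≥0∞) (hg : Measurable g) (x a : En n) {h : ℝ} {i : ℤ}
    (hh : h ∈ Ioc ((2 : ℝ) ^ i) (2 ^ (i + 1))) (hx : x ∈ cube a h) (j : ℤ) :
    avgE (Jterm n g j) (cube a h) ≤ 2 ^ ((n : ℝ) - 1) * Jterm n g (j + 1) x +
      (if j ≤ i + 1 then (2 : ℝ≥0∞) ^ ((1 : ℝ) * j) else 0) *
        (2 ^ (3 * (n : ℝ) - 1 - (i + 1)) * Jterm n g (i + 2) x) := by
  have hpos : (0 : ℝ) < 2 ^ i := by positivity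
  have hh0 : 0 < h := hpos.trans hh.1
  have hvol0 : volume (cube a h) ≠ 0 := by
    rw [volume_cube]; simp [hh0]
  have hvolt : volume (cube a h) ≠ ∞ := by rw [volume_cube]; simp
  have hdist : ∀ z ∈ cube a h, ∀ k, |z k - x k| ≤ 2 ^ (i + 1) := by
    intro z hz k
    have h1 := hz k; have h2 := hx k; have h3 := hh.2
    rw [abs_le]; constructor <;> linarith [h1.1, h1.2, h2.1, h2.2]
  have hz2 : ∀ k : ℤ, (2 : ℝ) ^ (k + 1) = 2 ^ k + 2 ^ k := by
    intro k; rw [zpow_add_one₀ (by norm_num)]; ring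
  have hmono : ∀ k l : ℤ, k ≤ l → (2 : ℝ) ^ k ≤ 2 ^ l := fun k l hkl =>
    zpow_le_zpow_right₀ (by norm_num) hkl
  by_cases hj : j ≤ i + 1
  · rw [if_pos hj]
    refine le_trans ?_ le_add_self
    have hsub : ∀ z ∈ cube a h, ∀ y ∈ ccube z (2 ^ j), y ∈ ccube x (2 ^ (i + 2)) := by
      intro z hz y hy k
      have h1 := hdist z hz k
      have h2 := (hy k).trans (hmono j (i + 1) hj)
      have h3 := hz2 (i + 1)
      have h4 : i + 1 + 1 = i + 2 := by ring
      rw [h4] at h3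
      have := abs_sub_le (y k) (z k) (x k)
      linarith
    -- Tonelli: each point `y` is counted for `z` in a cube of side `2 * 2 ^ j` only
    have hT : ∫⁻ z in cube a h, ∫⁻ y in ccube z (2 ^ j), g y ≤
        2 ^ (((j : ℝ) + 1) * n) * ∫⁻ y in ccube x (2 ^ (i + 2)), g y := by
      set R := {z : En n × En n | z.2 ∈ ccube z.1 (2 ^ j)} with hR
      have hRm : MeasurableSet R := measurableSet_ccube_rel n _
      set H : En n → ℝ≥0∞ := (ccube x (2 ^ (i + 2))).indicator g with hH
      have hHm : Measurable H := hg.indicator (measurableSet_ccube _ _)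
      calc _ ≤ ∫⁻ z in cube a h, ∫⁻ y, R.indicator (fun z => H z.2) (z, y) := by
            refine setLIntegral_mono' (measurableSet_cube a h) fun z hz => ?_
            rw [← lintegral_indicator (measurableSet_ccube z _)]
            refine lintegral_mono fun y => ?_
            by_cases hy : y ∈ ccube z (2 ^ j)
            · have h1 : (z, y) ∈ R := hy
              rw [indicator_of_mem hy, indicator_of_mem h1, hH,
                indicator_of_mem (hsub z hz y hy)]
            · rw [indicator_of_notMem hy]; exact zero_le
        _ ≤ ∫⁻ z, ∫⁻ y, R.indicator (fun z => H z.2) (z, y) := setLIntegral_le_lintegral _ _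
        _ = ∫⁻ y, ∫⁻ z, R.indicator (fun z => H z.2) (z, y) :=
            lintegral_lintegral_swap ((hHm.comp measurable_snd).indicator hRm).aemeasurable
        _ = ∫⁻ y, 2 ^ (((j : ℝ) + 1) * n) * H y := by
            refine lintegral_congr fun y => ?_
            have : ∀ z, R.indicator (fun z => H z.2) (z, y) =
                (ccube y (2 ^ j)).indicator (fun _ => H y) z := by
              intro z
              have hiff : (z, y) ∈ R ↔ z ∈ ccube y (2 ^ j) := by
                simp only [hR, ccube, mem_ofPred_eq]
                exact forall_congr' fun k => by rw [abs_sub_comm]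
              by_cases hz : z ∈ ccube y (2 ^ j)
              · rw [indicator_of_mem hz, indicator_of_mem (hiff.2 hz)]
              · rw [indicator_of_notMem hz, indicator_of_notMem (fun h => hz (hiff.1 h))]
            simp only [this]
            rw [lintegral_indicator (measurableSet_ccube _ _), setLIntegral_const, volume_ccube,
              mul_comm]
        _ = _ := by
            rw [lintegral_const_mul _ hHm, hH, lintegral_indicator (measurableSet_ccube _ _)]
    have hvol : (volume (cube a h))⁻¹ ≤ 2 ^ (-((i : ℝ) * n)) := by
      rw [ENNReal.rpow_neg]
      refine ENNReal.inv_le_inv.2 ?_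
      rw [volume_cube, ENNReal.rpow_mul, ENNReal.rpow_natCast, ← ofReal_two_zpow]
      gcongr
      exact hh.1.le
    unfold avgE
    have hm : Measurable (fun z => ∫⁻ y in ccube z (2 ^ j), g y) := by
      have := (measurable_Jterm n g hg j).const_mul (2 ^ (-((j : ℝ) * (1 - n))))
      unfold Jterm at this
      simpa only [← mul_assoc, ← two_rpow_add, neg_add_cancel, ENNReal.rpow_zero, one_mul] using this
    calc _ = (volume (cube a h))⁻¹ * (2 ^ ((j : ℝ) * (1 - n)) *
          ∫⁻ z in cube a h, ∫⁻ y in ccube z (2 ^ j), g y) := by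
          unfold Jterm
          rw [lintegral_const_mul _ hm]
      _ ≤ 2 ^ (-((i : ℝ) * n)) * (2 ^ ((j : ℝ) * (1 - n)) *
          (2 ^ (((j : ℝ) + 1) * n) * ∫⁻ y in ccube x (2 ^ (i + 2)), g y)) := by gcongr
      _ = _ := by
          unfold Jterm
          simp only [← mul_assoc, ← two_rpow_add]
          congr 2
          push_cast
          ring
  · rw [if_neg hj, zero_mul, add_zero]
    push Not at hj
    have hle : ∀ z ∈ cube a h, Jterm n g j z ≤ 2 ^ ((n : ℝ) - 1) * Jterm n g (j + 1) x := by
      intro z hz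
      have hsub : ccube z (2 ^ j) ⊆ ccube x (2 ^ (j + 1)) := by
        intro y hy k
        have h1 := (hdist z hz k).trans (hmono _ _ hj.le)
        have h2 := hy k
        have := abs_sub_le (y k) (z k) (x k)
        rw [hz2]; linarith
      unfold Jterm
      rw [← mul_assoc, ← two_rpow_add]
      have : (n : ℝ) - 1 + ((j + 1 : ℤ) : ℝ) * (1 - n) = j * (1 - n) := by push_cast; ring
      rw [this]
      gcongr
    unfold avgE
    calc _ ≤ (volume (cube a h))⁻¹ *
          ∫⁻ _ in cube a h, 2 ^ ((n : ℝ) - 1) * Jterm n g (j + 1) x := by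
          exact mul_le_mul_right (setLIntegral_mono' (measurableSet_cube a h) hle) _
      _ = _ := by
          rw [setLIntegral_const, mul_comm _ (volume (cube a h)), ← mul_assoc,
            ENNReal.inv_mul_cancel hvol0 hvolt, one_mul]

/-- The potential is an `A₁` weight: its maximal function is dominated by itself. -/
lemma maximal_Jop_le (n : ℕ) (g : En n → ℝ≥0∞) (hg : Measurable g) (x : En n) :
    maximal n (Jop n g) x ≤ MJC n * Jop n g x := by
  refine iSup_le fun a => iSup_le fun h => iSup_le fun hh => iSup_le fun hx => ?_
  obtain ⟨i, hi⟩ := exists_mem_Ioc_zpow hh (by norm_num : (1 : ℝ) < 2)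
  have e : avgE (Jop n g) (cube a h) = ∑' j, avgE (Jterm n g j) (cube a h) := by
    unfold avgE Jop
    rw [lintegral_tsum fun j => (measurable_Jterm n g hg j).aemeasurable, ENNReal.tsum_mul_left]
  rw [e]
  refine (ENNReal.tsum_le_tsum fun j => avgE_Jterm_le n g hg x a hi hx j).trans ?_
  have hsh : ∑' j : ℤ, Jterm n g (j + 1) x = Jop n g x :=
    (Equiv.addRight (1 : ℤ)).tsum_eq (fun j => Jterm n g j x)
  rw [ENNReal.tsum_add, ENNReal.tsum_mul_left, ENNReal.tsum_mul_right, tsum_le_geom, hsh]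
  unfold MJC
  rw [add_mul]
  refine add_le_add le_rfl ?_
  have h1 : geomC 1 * 2 ^ ((1 : ℝ) * ((i + 1 : ℤ) : ℝ)) *
      (2 ^ (3 * (n : ℝ) - 1 - (i + 1)) * Jterm n g (i + 2) x) =
      2 ^ (3 * (n : ℝ) - 1) * geomC 1 * Jterm n g (i + 2) x := by
    have : (2 : ℝ≥0∞) ^ (3 * (n : ℝ) - 1) =
        2 ^ ((1 : ℝ) * ((i + 1 : ℤ) : ℝ)) * 2 ^ (3 * (n : ℝ) - 1 - (i + 1)) := by
      rw [← two_rpow_add]; congr 1; push_cast; ring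
    rw [this]; ring
  rw [h1]
  gcongr
  exact Jterm_le_Jop n g _ x

lemma maximal_mono {n : ℕ} {g g' : En n → ℝ≥0∞} (hgg : ∀ x, g x ≤ g' x) (x : En n) :
    maximal n g x ≤ maximal n g' x := by
  unfold maximal avgE
  gcongr
  exact hgg _

lemma maximal_const_mul {n : ℕ} (c : ℝ≥0∞) (hc : c ≠ ∞) (g : En n → ℝ≥0∞) (x : En n) :
    maximal n (fun y => c * g y) x ≤ c * maximal n g x := by
  refine iSup_le fun a => iSup_le fun h => iSup_le fun hh => iSup_le fun hx => ?_
  have : avgE (fun y => c * g y) (cube a h) = c * avgE g (cube a h) := by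
    unfold avgE
    rw [lintegral_const_mul' _ _ hc]; ring
  rw [this]
  gcongr
  exact le_iSup_of_le a (le_iSup_of_le h (le_iSup_of_le hh (le_iSup_of_le hx le_rfl)))

/-- A function dominated by the potential has all its iterated maximal functions dominated by it. -/
lemma iterate_maximal_le (n m : ℕ) (g φ : En n → ℝ≥0∞) (hg : Measurable g) (C : ℝ≥0∞)
    (hC : C ≠ ∞) (hφ : ∀ x, φ x ≤ C * Jop n g x) (x : En n) :
    (maximal n)^[m] φ x ≤ MJC n ^ m * C * Jop n g x := by
  induction m generalizing x with
  | zero => simpa using hφ x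
  | succ k ih =>
    rw [Function.iterate_succ_apply']
    refine (maximal_mono ih x).trans ((maximal_const_mul _ ?_ _ x).trans ?_)
    · exact ENNReal.mul_ne_top (ENNReal.pow_ne_top (MJC_ne_top n)) hC
    · refine (mul_le_mul_right (maximal_Jop_le n g hg x) _).trans (le_of_eq ?_)
      ring

/-! ### Pointwise bound of a function by the potential of its gradient -/

/-- A cube of directions bounded away from the origin. -/
def dirs (n : ℕ) : Set (En n) := {v | ∀ i, v i ∈ Icc (1 / 2 : ℝ) 1}

lemma measurableSet_dirs (n : ℕ) : MeasurableSet (dirs n) :=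
  measurableSet_box (fun _ => Icc (1 / 2 : ℝ) 1) fun _ => measurableSet_Icc

lemma volume_dirs (n : ℕ) : volume (dirs n) = ENNReal.ofReal (1 / 2) ^ n :=
  volume_box (fun _ => Icc (1 / 2 : ℝ) 1) fun _ => by rw [Real.volume_Icc]; norm_num

lemma norm_le_of_mem_dirs {n : ℕ} {v : En n} (hv : v ∈ dirs n) : ‖v‖ ≤ n := by
  rw [EuclideanSpace.norm_eq]
  refine Real.sqrt_le_iff.2 ⟨by positivity, ?_⟩
  calc ∑ i, ‖v i‖ ^ 2 ≤ ∑ _i : Fin n, (1 : ℝ) := by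
        refine Finset.sum_le_sum fun i _ => ?_
        have := hv i
        rw [Real.norm_eq_abs, sq_abs]
        nlinarith [this.1, this.2]
    _ = n := by simp
    _ ≤ (n : ℝ) ^ 2 := by
        rcases Nat.eq_zero_or_pos n with h | h
        · simp [h]
        · have : (1 : ℝ) ≤ n := by exact_mod_cast h
          nlinarith

/-- The fundamental theorem of calculus along a ray. -/
lemma enorm_le_ray {n : ℕ} (hn : 0 < n) (f : En n → ℝ) (hf : ContDiff ℝ 1 f)
    (hc : HasCompactSupport f) (x v : En n) (hv : v ∈ dirs n) :
    ‖f x‖ₑ ≤ n * ∫⁻ r in Iio (0 : ℝ), ‖fderiv ℝ f (x + r • v)‖ₑ := by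
  have hv0 : v ≠ 0 := by
    rintro rfl
    have := (hv ⟨0, hn⟩).1
    norm_num at this
  have hline : ∀ r : ℝ, HasDerivAt (fun r : ℝ => x + r • v) v r := fun r => by
    simpa using ((hasDerivAt_id r).smul_const v).const_add x
  have hd : ∀ r : ℝ, deriv (fun r : ℝ => f (x + r • v)) r = fderiv ℝ f (x + r • v) v := fun r =>
    (((hf.differentiable (by norm_num)) _).hasFDerivAt.comp_hasDerivAt r (hline r)).deriv
  have hcomp : HasCompactSupport (fun r : ℝ => f (x + r • v)) :=
    hc.comp_isClosedEmbedding
      ((Homeomorph.addLeft x).isClosedEmbedding.comp (isClosedEmbedding_smul_left hv0))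
  have hcd : ContDiff ℝ 1 (fun r : ℝ => f (x + r • v)) :=
    hf.comp (contDiff_const.add (contDiff_id.smul contDiff_const))
  have h := hcomp.enorm_le_lintegral_Ici_deriv hcd 0
  simp only [zero_smul, add_zero, hd] at h
  rw [setLIntegral_congr Iio_ae_eq_Iic]
  have hm : Measurable (fun r : ℝ => ‖fderiv ℝ f (x + r • v)‖ₑ) := by
    have : Continuous (fun r : ℝ => fderiv ℝ f (x + r • v)) :=
      (hf.continuous_fderiv (by norm_num)).comp (by fun_prop)
    exact this.enorm.measurable
  rw [← lintegral_const_mul _ hm]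
  refine h.trans (lintegral_mono fun r => ?_)
  refine (ContinuousLinearMap.le_opENorm _ _).trans ?_
  rw [mul_comm]
  gcongr
  rw [← ofReal_norm, ← ENNReal.ofReal_natCast]
  exact ENNReal.ofReal_le_ofReal (norm_le_of_mem_dirs hv)

/-- Averaging over directions at distance about `2 ^ j` gives one scale of the potential. -/
lemma lintegral_dirs_le (n : ℕ) (g : En n → ℝ≥0∞) (hg : Measurable g) (x : En n) (j : ℤ) (r : ℝ)
    (hr : r ∈ Ico (-(2 : ℝ) ^ (j + 1)) (-2 ^ j)) :
    ∫⁻ v in dirs n, g (x + r • v) ≤ 2 ^ (-((j : ℝ) * n)) * ∫⁻ y in ccube x (2 ^ (j + 1)), g y := by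
  have hpos : (0 : ℝ) < 2 ^ j := by positivity
  have hr0 : r ≠ 0 := by rintro rfl; linarith [hr.2]
  have hrabs : 2 ^ j ≤ |r| := by rw [abs_of_neg (by linarith [hr.2])]; linarith [hr.2]
  have hrabs' : |r| ≤ 2 ^ (j + 1) := by
    rw [abs_of_neg (by linarith [hr.2])]; linarith [hr.1]
  set H : En n → ℝ≥0∞ := (ccube x (2 ^ (j + 1))).indicator g with hH
  have hHm : Measurable H := hg.indicator (measurableSet_ccube _ _)
  calc _ ≤ ∫⁻ v in dirs n, H (x + r • v) := by
        refine setLIntegral_mono' (measurableSet_dirs n) fun v hv => ?_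
        have : x + r • v ∈ ccube x (2 ^ (j + 1)) := by
          intro i
          have h1 : |v i| ≤ 1 := by
            rw [abs_le]; constructor <;> linarith [(hv i).1, (hv i).2]
          simp only [PiLp.add_apply, PiLp.smul_apply, smul_eq_mul, add_sub_cancel_left, abs_mul]
          nlinarith [abs_nonneg r]
        rw [hH, indicator_of_mem this]
    _ ≤ ∫⁻ v, H (x + r • v) := setLIntegral_le_lintegral _ _
    _ = ∫⁻ y, H (x + y) ∂(Measure.map (r • ·) (volume : Measure (En n))) := by
        rw [lintegral_map (f := fun y => H (x + y)) (hHm.comp (measurable_const_add x))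
          (measurable_const_smul r)]
    _ = ENNReal.ofReal |(r ^ n)⁻¹| * ∫⁻ y, H y := by
        rw [Measure.map_addHaar_smul _ hr0, lintegral_smul_measure, lintegral_add_left_eq_self]
        simp
    _ ≤ _ := by
        rw [hH, lintegral_indicator (measurableSet_ccube _ _)]
        gcongr
        rw [abs_inv, abs_pow, ENNReal.ofReal_inv_of_pos (by positivity), ENNReal.rpow_neg,
          ENNReal.inv_le_inv, ENNReal.ofReal_pow (abs_nonneg r), ENNReal.rpow_mul,
          ENNReal.rpow_natCast, ← ofReal_two_zpow]
        gcongr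

/-- The constant in the pointwise representation bound. -/
def repC (n : ℕ) : ℝ≥0∞ := (ENNReal.ofReal (1 / 2) ^ n)⁻¹ * (n * 2 ^ ((n : ℝ) - 1))

lemma repC_ne_top (n : ℕ) : repC n ≠ ∞ := by
  unfold repC
  refine ENNReal.mul_ne_top ?_ (ENNReal.mul_ne_top (by simp) (two_rpow_ne_top _))
  rw [ENNReal.inv_ne_top]
  simp

/-- A compactly supported `C¹` function is dominated by the potential of its gradient. -/
lemma le_Jop_fderiv (n : ℕ) (hn : 0 < n) (f : En n → ℝ) (hf : ContDiff ℝ 1 f)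
    (hc : HasCompactSupport f) (x : En n) :
    ‖f x‖ₑ ≤ repC n * Jop n (fun y => ‖fderiv ℝ f y‖ₑ) x := by
  set g : En n → ℝ≥0∞ := fun y => ‖fderiv ℝ f y‖ₑ with hg
  have hgm : Measurable g := (hf.continuous_fderiv (by norm_num)).enorm.measurable
  have hV0 : volume (dirs n) ≠ 0 := by rw [volume_dirs]; simp
  have hVt : volume (dirs n) ≠ ∞ := by rw [volume_dirs]; simp
  have h1 : volume (dirs n) * ‖f x‖ₑ ≤
      n * ∫⁻ v in dirs n, ∫⁻ r in Iio (0 : ℝ), g (x + r • v) := by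
    calc _ = ∫⁻ _ in dirs n, ‖f x‖ₑ := by rw [setLIntegral_const, mul_comm]
      _ ≤ ∫⁻ v in dirs n, n * ∫⁻ r in Iio (0 : ℝ), g (x + r • v) :=
          setLIntegral_mono' (measurableSet_dirs n) fun v hv => enorm_le_ray hn f hf hc x v hv
      _ = _ := lintegral_const_mul' _ _ (by simp)
  have hjm : Measurable (fun z : En n × ℝ => g (x + z.2 • z.1)) := hgm.comp (by fun_prop)
  have h2 : ∫⁻ v in dirs n, ∫⁻ r in Iio (0 : ℝ), g (x + r • v) =
      ∫⁻ r in Iio (0 : ℝ), ∫⁻ v in dirs n, g (x + r • v) :=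
    lintegral_lintegral_swap (f := fun v r => g (x + r • v)) hjm.aemeasurable
  have hcover : Iio (0 : ℝ) ⊆ ⋃ j : ℤ, Ico (-(2 : ℝ) ^ (j + 1)) (-2 ^ j) := by
    intro r hr
    obtain ⟨j, hj⟩ := exists_mem_Ioc_zpow (neg_pos.2 hr) (by norm_num : (1 : ℝ) < 2)
    exact mem_iUnion.2 ⟨j, by linarith [hj.2], by linarith [hj.1]⟩
  have h3 : ∫⁻ r in Iio (0 : ℝ), ∫⁻ v in dirs n, g (x + r • v) ≤
      2 ^ ((n : ℝ) - 1) * Jop n g x := by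
    calc _ ≤ ∫⁻ r in ⋃ j : ℤ, Ico (-(2 : ℝ) ^ (j + 1)) (-2 ^ j),
          ∫⁻ v in dirs n, g (x + r • v) := lintegral_mono_set hcover
      _ ≤ ∑' j : ℤ, ∫⁻ r in Ico (-(2 : ℝ) ^ (j + 1)) (-2 ^ j),
          ∫⁻ v in dirs n, g (x + r • v) := lintegral_iUnion_le _ _
      _ ≤ ∑' j : ℤ, 2 ^ ((n : ℝ) - 1) * Jterm n g (j + 1) x := by
          refine ENNReal.tsum_le_tsum fun j => ?_
          refine (setLIntegral_mono' measurableSet_Ico fun r hr =>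
            lintegral_dirs_le n g hgm x j r hr).trans ?_
          rw [setLIntegral_const, Real.volume_Ico]
          have e : -(2 : ℝ) ^ j - -2 ^ (j + 1) = 2 ^ j := by
            rw [zpow_add_one₀ (by norm_num)]; ring
          rw [e, ofReal_two_zpow]
          unfold Jterm
          rw [mul_right_comm, ← two_rpow_add, ← mul_assoc, ← two_rpow_add]
          refine le_of_eq ?_
          congr 2
          push_cast; ring
      _ = _ := by
          rw [ENNReal.tsum_mul_left]
          congr 1
          exact (Equiv.addRight (1 : ℤ)).tsum_eq (fun j => Jterm n g j x)
  have h4 : volume (dirs n) * ‖f x‖ₑ ≤ n * (2 ^ ((n : ℝ) - 1) * Jop n g x) := by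
    refine h1.trans ?_
    rw [h2]
    gcongr
  calc ‖f x‖ₑ = (volume (dirs n))⁻¹ * (volume (dirs n) * ‖f x‖ₑ) := by
        rw [← mul_assoc, ENNReal.inv_mul_cancel hV0 hVt, one_mul]
    _ ≤ (volume (dirs n))⁻¹ * (n * (2 ^ ((n : ℝ) - 1) * Jop n g x)) := by gcongr
    _ = _ := by rw [volume_dirs]; unfold repC; ring

/-! ### Weights -/

/-- The pointwise form of the `A_{p,q}` condition on cubes for an `ℝ≥0∞`-valued weight. -/
def ApqBound (n : ℕ) (q p' : ℝ) (W : En n → ℝ≥0∞) (A : ℝ≥0∞) : Prop :=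
  ∀ (a : En n) (h : ℝ), 0 < h → avgE (fun x => W x ^ q) (cube a h) *
    avgE (fun x => W x ^ (-p')) (cube a h) ^ (q / p') ≤ A

lemma volume_cube_ne_zero {n : ℕ} (a : En n) {h : ℝ} (hh : 0 < h) : volume (cube a h) ≠ 0 := by
  rw [volume_cube]; simp [hh]

lemma volume_cube_ne_top {n : ℕ} (a : En n) (h : ℝ) : volume (cube a h) ≠ ∞ := by
  rw [volume_cube]; simp

lemma iUnion_ccube (n : ℕ) : ⋃ k : ℕ, ccube (0 : En n) k = univ := by
  refine eq_univ_of_forall fun x => ?_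
  obtain ⟨k, hk⟩ := exists_nat_ge ‖x‖
  refine mem_iUnion.2 ⟨k, fun i => ?_⟩
  have := PiLp.norm_apply_le x i
  simp only [PiLp.zero_apply, sub_zero]
  rw [← Real.norm_eq_abs]
  linarith

/-- A set of positive measure meets a large cube in positive measure. -/
lemma exists_ccube_pos {n : ℕ} (E : Set (En n)) (hE : volume E ≠ 0) :
    ∃ k : ℕ, ∀ l : ℕ, k ≤ l → volume (E ∩ ccube (0 : En n) l) ≠ 0 := by
  by_contra hcon
  push Not at hcon
  apply hE
  have h1 : ∀ k : ℕ, volume (E ∩ ccube (0 : En n) k) = 0 := by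
    intro k
    obtain ⟨l, hl, h0⟩ := hcon k
    have hsub : ccube (0 : En n) k ⊆ ccube (0 : En n) l := fun y hy i =>
      (hy i).trans (Nat.cast_le.2 hl)
    exact measure_mono_null (inter_subset_inter_right _ hsub) h0
  have h2 : E = ⋃ k : ℕ, E ∩ ccube (0 : En n) k := by
    rw [← inter_iUnion, iUnion_ccube, inter_univ]
  rw [h2]
  exact measure_iUnion_null h1

/-- A weight with finite `A_{p,q}` constant is either null or positive almost everywhere. -/
lemma ae_zero_or_ae_pos {n : ℕ} {q p' : ℝ} (hq : 0 < q) (hp' : 0 < p') {W : En n → ℝ≥0∞}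
    (hW : Measurable W) (hWt : ∀ x, W x ≠ ∞) {A : ℝ≥0∞} (hA : A ≠ ∞) (hAW : ApqBound n q p' W A) :
    (∀ᵐ x, W x = 0) ∨ ∀ᵐ x, W x ≠ 0 := by
  by_contra hcon
  rw [not_or] at hcon
  obtain ⟨h1, h2⟩ := hcon
  have h1' : volume {x | W x ≠ 0} ≠ 0 := fun h => h1 (ae_iff.2 h)
  have h2' : volume {x | W x = 0} ≠ 0 := fun h => h2 (ae_iff.2 (by simpa using h))
  obtain ⟨k1, hk1⟩ := exists_ccube_pos _ h1'
  obtain ⟨k2, hk2⟩ := exists_ccube_pos _ h2'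
  set k := max (max k1 k2) 1 with hk
  have hk0 : (0 : ℝ) < 2 * k := by
    have : 1 ≤ k := le_max_right _ _
    have : (1 : ℝ) ≤ k := by exact_mod_cast this
    linarith
  have hp := hk1 k ((le_max_left _ _).trans (le_max_left _ _))
  have hz := hk2 k ((le_max_right _ _).trans (le_max_left _ _))
  rw [ccube_eq_cube] at hp hz
  set a : En n := WithLp.toLp 2 fun i => (0 : En n) i - (k : ℝ)
  set R := cube a (2 * k) with hR
  have hRm : MeasurableSet R := measurableSet_cube _ _
  have hI1 : ∫⁻ x in R, W x ^ q ≠ 0 := by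
    rw [Ne, lintegral_eq_zero_iff (hW.pow_const q)]
    intro h0
    apply hp
    have h0' := ae_iff.1 ((ae_restrict_iff' hRm).1 h0)
    refine measure_mono_null (fun x hx => ?_) h0'
    simp only [mem_ofPred_eq, Classical.not_imp]
    refine ⟨hx.2, ?_⟩
    simp only [Pi.zero_apply, ENNReal.rpow_eq_zero_iff]
    have := hx.1
    simp only [mem_ofPred_eq] at this
    simp [this, hWt x]
  have hI2 : ∫⁻ x in R, W x ^ (-p') = ∞ := by
    by_contra hne
    have h0 := ae_lt_top (hW.pow_const (-p')) hne
    apply hz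
    have h0' := ae_iff.1 ((ae_restrict_iff' hRm).1 h0)
    refine measure_mono_null (fun x hx => ?_) h0'
    simp only [mem_ofPred_eq, Classical.not_imp]
    refine ⟨hx.2, ?_⟩
    have h3 : W x = 0 := hx.1
    rw [h3, ENNReal.zero_rpow_of_neg (by linarith)]
    simp
  have := hAW a (2 * k) hk0
  rw [← hR] at this
  unfold avgE at this
  rw [hI2, ENNReal.mul_top (ENNReal.inv_ne_zero.2 (volume_cube_ne_top _ _)),
    ENNReal.top_rpow_of_pos (by positivity), ENNReal.mul_top] at this
  · exact hA (top_le_iff.1 this)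
  · exact mul_ne_zero (ENNReal.inv_ne_zero.2 (volume_cube_ne_top _ _)) hI1

/-- The `A_{p,q}` condition in terms of the two measures, without averages. -/
lemma cube_bound {n : ℕ} {q p' : ℝ} (hq : 0 < q) (hp' : 0 < p') {W : En n → ℝ≥0∞} {A : ℝ≥0∞}
    (hAW : ApqBound n q p' W A) (a : En n) {h : ℝ} (hh : 0 < h) :
    (∫⁻ x in cube a h, W x ^ q) * (∫⁻ x in cube a h, W x ^ (-p')) ^ (q / p') ≤
      A * volume (cube a h) ^ (1 + q / p') := by
  have h0 := volume_cube_ne_zero a hh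
  have ht := volume_cube_ne_top a h
  have hqp : 0 ≤ q / p' := by positivity
  have := hAW a h hh
  unfold avgE at this
  set V := volume (cube a h)
  calc _ = (V⁻¹ * (∫⁻ x in cube a h, W x ^ q)) *
        (V⁻¹ * ∫⁻ x in cube a h, W x ^ (-p')) ^ (q / p') * V ^ (1 + q / p') := by
        rw [ENNReal.mul_rpow_of_nonneg _ _ hqp, ENNReal.rpow_add _ _ h0 ht, ENNReal.rpow_one]
        set I1 := ∫⁻ x in cube a h, W x ^ q
        set I2 := (∫⁻ x in cube a h, W x ^ (-p')) ^ (q / p')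
        have e1 : V⁻¹ * V = 1 := ENNReal.inv_mul_cancel h0 ht
        have e2 : V⁻¹ ^ (q / p') * V ^ (q / p') = 1 := by
          rw [← ENNReal.mul_rpow_of_nonneg _ _ hqp, e1, ENNReal.one_rpow]
        calc I1 * I2 = I1 * I2 * (V⁻¹ * V) * (V⁻¹ ^ (q / p') * V ^ (q / p')) := by
              rw [e1, e2, mul_one, mul_one]
          _ = _ := by ring
    _ ≤ _ := by gcongr

lemma cube_integrals_ne_top {n : ℕ} {q p' : ℝ} (hq : 0 < q) (hp' : 0 < p') {W : En n → ℝ≥0∞}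
    (hW : Measurable W) (hWt : ∀ x, W x ≠ ∞) (hW0 : ∀ᵐ x, W x ≠ 0) {A : ℝ≥0∞} (hA : A ≠ ∞)
    (hAW : ApqBound n q p' W A) (a : En n) {h : ℝ} (hh : 0 < h) :
    ∫⁻ x in cube a h, W x ^ q ≠ ∞ ∧ ∫⁻ x in cube a h, W x ^ (-p') ≠ ∞ := by
  have h0 := volume_cube_ne_zero a hh
  have ht := volume_cube_ne_top a h
  have hqp : 0 < q / p' := by positivity
  have hb := cube_bound hq hp' hAW a hh
  have hbt : A * volume (cube a h) ^ (1 + q / p') ≠ ∞ :=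
    ENNReal.mul_ne_top hA (ENNReal.rpow_ne_top_of_nonneg (by positivity) ht)
  have hpos : ∀ s : ℝ, ∫⁻ x in cube a h, W x ^ s ≠ 0 := by
    intro s
    rw [Ne, lintegral_eq_zero_iff (hW.pow_const s)]
    intro hz
    have hf : ∀ᵐ x ∂(volume.restrict (cube a h)), False := by
      filter_upwards [hz, ae_restrict_of_ae hW0] with x hx hx0
      simp only [Pi.zero_apply, ENNReal.rpow_eq_zero_iff] at hx
      simp [hx0, hWt x] at hx
    rw [ae_iff] at hf
    simp at hf
    exact h0 hf
  constructor
  · intro hcon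
    rw [hcon, ENNReal.top_mul] at hb
    · exact hbt (top_le_iff.1 hb)
    · rw [Ne, ENNReal.rpow_eq_zero_iff]
      have := hpos (-p')
      simp [this, hqp.not_gt]
  · intro hcon
    rw [hcon, ENNReal.top_rpow_of_pos hqp, ENNReal.mul_top (hpos q)] at hb
    exact hbt (top_le_iff.1 hb)

/-! ### The two-weight bound for one grid and for the discrete potential -/

lemma measurable_dyFrac (n : ℕ) (t : Fin n → Bool) (g : En n → ℝ≥0∞) :
    Measurable (dyFrac n t g) :=
  Measurable.tsum fun P => ((grid n t).measurable_ind P).const_mul _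

/-- The weighted estimate for one dyadic fractional integral, obtained from the two-measure bound
with `dσ = W^{-p'} dx` and `du = W^q dx` applied to `g W^{p'}`. -/
lemma dyFrac_weighted (n : ℕ) (t : Fin n → Bool) {p q p' r θ : ℝ} (hp0 : 1 < p) (hq0 : 0 < q)
    (hpp : p' * (p - 1) = p) (hr : r = 1 + q / p') (hθ : 0 < θ) (hθ1 : θ < 1)
    (hθn : θ = ((n : ℝ) - 1) / n)
    (hp : 1 / p = 1 - θ + θ / r) (hq : 1 / q = θ / r) {W : En n → ℝ≥0∞} (hW : Measurable W)
    (hWt : ∀ x, W x ≠ ∞) (hW0 : ∀ᵐ x, W x ≠ 0) {A : ℝ≥0∞} (hA : A ≠ ∞)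
    (hAW : ApqBound n q p' W A) (g : En n → ℝ≥0∞) (hg : Measurable g) (hgi : ∫⁻ x, g x ≠ ∞) :
    (∫⁻ y, (W y * dyFrac n t g y) ^ q) ^ (1 / q) ≤
      DGrid.fracC n r θ * A ^ (θ * max 1 (1 / (r - 1))) * (∫⁻ x, (W x * g x) ^ p) ^ (1 / p) := by
  have hp' : 0 < p' := by
    by_contra h
    nlinarith
  have hqp : 0 < q / p' := div_pos hq0 hp'
  have hr1 : 1 < r := by linarith
  have hmq : Measurable fun x => W x ^ q := hW.pow_const q
  have hmp : Measurable fun x => W x ^ (-p') := hW.pow_const _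
  set u : Measure (En n) := volume.withDensity fun x => W x ^ q with hu
  set σ : Measure (En n) := volume.withDensity fun x => W x ^ (-p') with hσ
  have hpos : ∀ P : ℤ × (Fin n → ℤ), (0 : ℝ) < 2 ^ P.1 := fun P => by positivity
  have hmeas := fun P => (grid n t).meas P
  have huS : ∀ P, u ((grid n t).S P) = ∫⁻ x in (grid n t).S P, W x ^ q := fun P =>
    withDensity_apply _ (hmeas P)
  have hσS : ∀ P, σ ((grid n t).S P) = ∫⁻ x in (grid n t).S P, W x ^ (-p') := fun P =>
    withDensity_apply _ (hmeas P)
  have hcancel : ∀ᵐ x, W x ^ (-p') * (g x * W x ^ p') = g x := by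
    filter_upwards [hW0] with x hx
    rw [mul_left_comm, ← ENNReal.rpow_add _ _ hx (hWt x)]
    simp
  set f : En n → ℝ≥0∞ := fun x => g x * W x ^ p' with hf
  have hfm : Measurable f := hg.mul (hW.pow_const _)
  have hfS : ∀ P, ∫⁻ x in (grid n t).S P, f x ∂σ = ∫⁻ x in (grid n t).S P, g x := by
    intro P
    rw [hσ, setLIntegral_withDensity_eq_setLIntegral_mul _ hmp hfm (hmeas P)]
    exact lintegral_congr_ae (ae_restrict_of_ae hcancel)
  have key := (grid n t).fop_tsum_bound σ u hr1 hθ hθ1 hp hq hA ?_ ?_ ?_ ?_ f hfm ?_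
  · have e1 : ∫⁻ y, (W y * dyFrac n t g y) ^ q = ∫⁻ y, (∑' P, volume ((grid n t).S P) ^ (-θ) *
        (∫⁻ x in (grid n t).S P, f x ∂σ) * (grid n t).ind P y) ^ q ∂u := by
      have e : ∀ y, (∑' P, volume ((grid n t).S P) ^ (-θ) *
        (∫⁻ x in (grid n t).S P, f x ∂σ) * (grid n t).ind P y) = dyFrac n t g y := by
        intro y
        simp only [hfS, hθn, dyFrac]
      simp only [e]
      rw [hu, lintegral_withDensity_eq_lintegral_mul _ hmq ((measurable_dyFrac n t g).pow_const q)]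
      refine lintegral_congr fun y => ?_
      rw [Pi.mul_apply, ENNReal.mul_rpow_of_nonneg _ _ hq0.le]
    have e2 : ∫⁻ x, f x ^ p ∂σ = ∫⁻ x, (W x * g x) ^ p := by
      rw [hσ, lintegral_withDensity_eq_lintegral_mul _ hmp (hfm.pow_const p)]
      refine lintegral_congr_ae ?_
      filter_upwards [hW0] with x hx
      have hp1 : 0 ≤ p := by linarith
      simp only [Pi.mul_apply, hf]
      rw [ENNReal.mul_rpow_of_nonneg _ _ hp1, ENNReal.mul_rpow_of_nonneg _ _ hp1, mul_left_comm,
        ← ENNReal.rpow_mul, ← ENNReal.rpow_add _ _ hx (hWt x), mul_comm]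
      congr 2
      linarith
    rw [e1, ← e2]
    exact key
  · intro P
    obtain ⟨a, hsub, -⟩ := grid_subset_cube n t P
    rw [hσS]
    exact ne_top_of_le_ne_top (cube_integrals_ne_top hq0 hp' hW hWt hW0 hA hAW a (hpos P)).2
      (lintegral_mono_set hsub)
  · intro P
    obtain ⟨a, hsub, -⟩ := grid_subset_cube n t P
    rw [huS]
    exact ne_top_of_le_ne_top (cube_integrals_ne_top hq0 hp' hW hWt hW0 hA hAW a (hpos P)).1
      (lintegral_mono_set hsub)
  · intro E hE
    have h := ENNReal.lintegral_mul_norm_pow_le (μ := volume.restrict E) hmq.aemeasurable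
      hmp.aemeasurable (p := 1 / r) (q := 1 - 1 / r) (by positivity)
      (by rw [sub_nonneg, div_le_one (by linarith)]; exact hr1.le) (by ring)
    rw [hu, hσ, withDensity_apply _ hE, withDensity_apply _ hE]
    refine le_trans (le_of_eq ?_) h
    have : ∀ᵐ x ∂(volume.restrict E),
        (W x ^ q) ^ (1 / r) * (W x ^ (-p')) ^ (1 - 1 / r) = 1 := by
      filter_upwards [ae_restrict_of_ae hW0] with x hx
      rw [← ENNReal.rpow_mul, ← ENNReal.rpow_mul, ← ENNReal.rpow_add _ _ hx (hWt x)]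
      have : q * (1 / r) + -p' * (1 - 1 / r) = 0 := by
        have hr0 : r ≠ 0 := by linarith
        have : q = p' * (r - 1) := by rw [hr]; field_simp; ring
        rw [this]
        field_simp
        ring
      rw [this, ENNReal.rpow_zero]
    rw [lintegral_congr_ae this]
    simp
  · intro P
    obtain ⟨a, hsub, hvol⟩ := grid_subset_cube n t P
    rw [huS, hσS, ← hvol]
    have e : r - 1 = q / p' := by linarith
    rw [e, hr]
    refine le_trans ?_ (cube_bound hq0 hp' hAW a (hpos P))
    gcongr
  · intro P
    rw [hfS]
    exact ne_top_of_le_ne_top hgi (setLIntegral_le_lintegral _ _)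

/-- Weighted `L^p → L^q` bound for the discrete Riesz potential. -/
lemma Jop_weighted (n : ℕ) (hn : 2 ≤ n) {p q p' r θ : ℝ} (hp0 : 1 < p) (hq0 : 1 ≤ q)
    (hpp : p' * (p - 1) = p) (hr : r = 1 + q / p') (hθ : 0 < θ) (hθ1 : θ < 1)
    (hθn : θ = ((n : ℝ) - 1) / n)
    (hp : 1 / p = 1 - θ + θ / r) (hq : 1 / q = θ / r) {W : En n → ℝ≥0∞} (hW : Measurable W)
    (hWt : ∀ x, W x ≠ ∞) {A : ℝ≥0∞} (hA : A ≠ ∞)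
    (hAW : ApqBound n q p' W A) (g : En n → ℝ≥0∞) (hg : Measurable g) (hgi : ∫⁻ x, g x ≠ ∞) :
    (∫⁻ y, (W y * Jop n g y) ^ q) ^ (1 / q) ≤
      2 ^ (3 * ((n : ℝ) - 1)) * 2 ^ n * DGrid.fracC n r θ * A ^ (θ * max 1 (1 / (r - 1))) *
        (∫⁻ x, (W x * g x) ^ p) ^ (1 / p) := by
  have hq1 : 0 < q := by linarith
  have hp' : 0 < p' := by
    by_contra h
    nlinarith
  rcases ae_zero_or_ae_pos hq1 hp' hW hWt hA hAW with h0 | h0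
  · have : ∫⁻ y, (W y * Jop n g y) ^ q = 0 := by
      rw [lintegral_congr_ae (g := fun _ => 0), lintegral_zero]
      filter_upwards [h0] with x hx
      simp [hx, hq1]
    rw [this, ENNReal.zero_rpow_of_pos (by positivity)]
    exact zero_le
  set B : ℝ≥0∞ := DGrid.fracC n r θ * A ^ (θ * max 1 (1 / (r - 1))) *
    (∫⁻ x, (W x * g x) ^ p) ^ (1 / p) with hB
  have hone : ∀ t, ∫⁻ y, (W y * dyFrac n t g y) ^ q ≤ B ^ q := by
    intro t
    have := dyFrac_weighted n t hp0 hq1 hpp hr hθ hθ1 hθn hp hq hW hWt h0 hA hAW g hg hgi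
    rw [← hB] at this
    have h2 := ENNReal.rpow_le_rpow this hq1.le
    rwa [← ENNReal.rpow_mul, one_div_mul_cancel hq1.ne', ENNReal.rpow_one] at h2
  set K : ℝ≥0∞ := 2 ^ (3 * ((n : ℝ) - 1)) with hK
  have hcard : (Finset.univ : Finset (Fin n → Bool)).card = 2 ^ n := by simp
  have hmt : ∀ t, Measurable fun y => (W y * dyFrac n t g y) ^ q := fun t =>
    (hW.mul (measurable_dyFrac n t g)).pow_const q
  have hpt : ∀ y, (W y * Jop n g y) ^ q ≤
      K ^ q * ((2 : ℝ≥0∞) ^ n) ^ (q - 1) * ∑ t, (W y * dyFrac n t g y) ^ q := by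
    intro y
    calc (W y * Jop n g y) ^ q ≤ (K * ∑ t, W y * dyFrac n t g y) ^ q := by
          refine ENNReal.rpow_le_rpow ?_ hq1.le
          rw [← Finset.mul_sum, mul_left_comm]
          exact mul_le_mul_right (Jop_le_dyFrac n hn g y) _
      _ = K ^ q * (∑ t, W y * dyFrac n t g y) ^ q := ENNReal.mul_rpow_of_nonneg _ _ hq1.le
      _ ≤ K ^ q * (((Finset.univ : Finset (Fin n → Bool)).card : ℝ≥0∞) ^ (q - 1) *
            ∑ t, (W y * dyFrac n t g y) ^ q) :=
          mul_le_mul_right (ENNReal.rpow_sum_le_const_mul_sum_rpow _ _ hq0) _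
      _ = _ := by rw [hcard]; push_cast; ring
  have hI_int : ∫⁻ y, (W y * Jop n g y) ^ q ≤ (K * 2 ^ n * B) ^ q := by
    calc _ ≤ ∫⁻ y, K ^ q * ((2 : ℝ≥0∞) ^ n) ^ (q - 1) * ∑ t, (W y * dyFrac n t g y) ^ q :=
          lintegral_mono hpt
      _ = K ^ q * ((2 : ℝ≥0∞) ^ n) ^ (q - 1) * ∑ t, ∫⁻ y, (W y * dyFrac n t g y) ^ q := by
          rw [lintegral_const_mul (f := fun y => ∑ t, (W y * dyFrac n t g y) ^ q) _
            (Finset.measurable_sum _ fun t _ => hmt t), lintegral_finsetSum _ fun t _ => hmt t]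
      _ ≤ K ^ q * ((2 : ℝ≥0∞) ^ n) ^ (q - 1) * ∑ _t : Fin n → Bool, B ^ q := by
          gcongr with t
          exact hone t
      _ = K ^ q * (((2 : ℝ≥0∞) ^ n) ^ (q - 1) * 2 ^ n) * B ^ q := by
          rw [Finset.sum_const, hcard, nsmul_eq_mul]; push_cast; ring
      _ = _ := by
          have h2 : ((2 : ℝ≥0∞) ^ n) ^ (q - 1) * 2 ^ n = (2 ^ n) ^ q := by
            conv_lhs => rw [← ENNReal.rpow_one ((2 : ℝ≥0∞) ^ n), ← ENNReal.rpow_mul, one_mul]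
            rw [← ENNReal.rpow_add _ _ (by simp) (by simp)]
            simp
          rw [h2, ENNReal.mul_rpow_of_nonneg (K * 2 ^ n) B hq1.le,
            ENNReal.mul_rpow_of_nonneg K (2 ^ n) hq1.le]
  calc _ ≤ ((K * 2 ^ n * B) ^ q) ^ (1 / q) := ENNReal.rpow_le_rpow hI_int (by positivity)
    _ = K * 2 ^ n * B := by
        rw [← ENNReal.rpow_mul, mul_one_div_cancel hq1.ne', ENNReal.rpow_one]
    _ = _ := by rw [hB]; ring

/-! ### The Sobolev inequality for the iterated maximal function -/

/-- weighted Sobolev bound for the iterated maximal operator, `1 < p < n`: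
`‖w Mᵐf‖_{L^{p*}} ≤ c [w]_{A_{p,p*}}^{(1/n') max{1, p'/p*}} ‖w |∇f|‖_{L^p}`. -/
theorem statement7 (n m : ℕ) (hn : 2 ≤ n) (hm : 1 ≤ m) (p : ℝ) (hp : 1 < p) (hpn : p < n) :
    ∃ c : ℝ, 0 < c ∧ ∀ w : En n → ℝ, (∀ x, 0 ≤ w x) → LocallyIntegrable w volume →
      Apq n (n * p / (n - p)) (p / (p - 1)) w < ∞ →
      ∀ f : En n → ℝ, ContDiff ℝ (⊤ : ℕ∞) f → HasCompactSupport f →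
        lpNorm (n * p / (n - p))
            (fun x => ENNReal.ofReal (w x) *
              (maximal n)^[m] (fun y => ENNReal.ofReal |f y|) x) volume ≤
          ENNReal.ofReal c *
            Apq n (n * p / (n - p)) (p / (p - 1)) w ^
              ((((n : ℝ) - 1) / n) * max 1 ((p / (p - 1)) / (n * p / (n - p)))) *
            lpNorm p (fun x => ENNReal.ofReal (w x) * ENNReal.ofReal ‖fderiv ℝ f x‖) volume := by
  have hnR : (2 : ℝ) ≤ n := by exact_mod_cast hn
  have hn0 : (0 : ℝ) < n := by linarith
  set q : ℝ := n * p / (n - p) with hqdef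
  set p' : ℝ := p / (p - 1) with hp'def
  have hnp : 0 < (n : ℝ) - p := by linarith
  have hp1 : 0 < p - 1 := by linarith
  have hp'0 : 0 < p' := by positivity
  have hq1 : 1 ≤ q := by
    rw [hqdef, le_div_iff₀ hnp]
    nlinarith
  have hq0 : 0 < q := by linarith
  set θ : ℝ := ((n : ℝ) - 1) / n with hθdef
  set r : ℝ := 1 + q / p' with hrdef
  have hθ0 : 0 < θ := div_pos (by linarith) hn0
  have hθ1 : θ < 1 := by rw [hθdef, div_lt_one hn0]; linarith
  have hr1 : 1 < r := by
    have := div_pos hq0 hp'0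
    linarith
  -- the relation `r = q θ` between the exponents
  have hrq : r = q * θ := by
    rw [hrdef, hqdef, hp'def, hθdef]
    field_simp
    ring
  have hq : 1 / q = θ / r := by
    rw [hrq]; field_simp
  have hpe : 1 / p = 1 - θ + θ / r := by
    rw [← hq, hqdef, hθdef]
    field_simp
    ring
  have hpp : p' * (p - 1) = p := by rw [hp'def]; field_simp
  have hexp : 1 / (r - 1) = p' / q := by
    rw [hrdef, add_sub_cancel_left, one_div_div]
  set C₁ : ℝ≥0∞ := MJC n ^ m * repC n with hC₁
  set C₂ : ℝ≥0∞ := 2 ^ (3 * ((n : ℝ) - 1)) * 2 ^ n * DGrid.fracC n r θ with hC₂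
  have hC₁t : C₁ ≠ ∞ := ENNReal.mul_ne_top (ENNReal.pow_ne_top (MJC_ne_top n)) (repC_ne_top n)
  have hC₂t : C₂ ≠ ∞ := ENNReal.mul_ne_top (ENNReal.mul_ne_top (two_rpow_ne_top _) (by simp))
    (DGrid.fracC_ne_top hn0 hr1 hθ0 hθ1)
  have hCt : C₁ * C₂ ≠ ∞ := ENNReal.mul_ne_top hC₁t hC₂t
  refine ⟨(C₁ * C₂).toReal + 1, by positivity, fun w hw hwl hA f hf hfc => ?_⟩
  have hwm := hwl.aestronglyMeasurable.aemeasurable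
  set W : En n → ℝ≥0∞ := fun x => ENNReal.ofReal (hwm.mk w x) with hWdef
  have hW : Measurable W := hwm.measurable_mk.ennreal_ofReal
  have hWt : ∀ x, W x ≠ ∞ := fun x => ENNReal.ofReal_ne_top
  have hWw : ∀ᵐ x, ENNReal.ofReal (w x) = W x := by
    filter_upwards [hwm.ae_eq_mk] with x hx
    simp only [hWdef, ← hx]
  have havg : ∀ (s : ℝ) (Q : Set (En n)),
      avgE (fun x => W x ^ s) Q = avgE (fun x => ENNReal.ofReal (w x) ^ s) Q := by
    intro s Q
    unfold avgE
    congr 1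
    refine lintegral_congr_ae (ae_restrict_of_ae ?_)
    filter_upwards [hWw] with x hx
    rw [hx]
  have hAW : ApqBound n q p' W (Apq n q p' w) := by
    intro a h hh
    rw [havg, havg]
    exact le_iSup_of_le a (le_iSup_of_le h (le_iSup_of_le hh le_rfl))
  have hf1 : ContDiff ℝ 1 f := hf.of_le (by exact_mod_cast le_top)
  have hdc : Continuous (fderiv ℝ f) := hf1.continuous_fderiv one_ne_zero
  set g : En n → ℝ≥0∞ := fun y => ‖fderiv ℝ f y‖ₑ with hg
  have hgm : Measurable g := hdc.enorm.measurable
  have hgi : ∫⁻ x, g x ≠ ∞ :=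
    (hdc.integrable_of_hasCompactSupport (hfc.fderiv ℝ)).hasFiniteIntegral.ne
  have hM : ∀ x, (maximal n)^[m] (fun y => ENNReal.ofReal |f y|) x ≤ C₁ * Jop n g x := fun x =>
    iterate_maximal_le n m g _ hgm (repC n) (repC_ne_top n) (fun y => by
      rw [← Real.norm_eq_abs, ofReal_norm]
      exact le_Jop_fderiv n (by omega) f hf1 hfc y) x
  have hJ := Jop_weighted n hn hp hq1 hpp hrdef hθ0 hθ1 hθdef hpe hq hW hWt hA.ne hAW g hgm hgi
  have hL : lpNorm q (fun x => ENNReal.ofReal (w x) *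
      (maximal n)^[m] (fun y => ENNReal.ofReal |f y|) x) volume ≤
      C₁ * (∫⁻ y, (W y * Jop n g y) ^ q) ^ (1 / q) := by
    have hJm : Measurable fun y => (W y * Jop n g y) ^ q :=
      (hW.mul (measurable_Jop n g hgm)).pow_const q
    have e : C₁ * (∫⁻ y, (W y * Jop n g y) ^ q) ^ (1 / q) =
        (∫⁻ y, C₁ ^ q * (W y * Jop n g y) ^ q) ^ (1 / q) := by
      rw [lintegral_const_mul (f := fun y => (W y * Jop n g y) ^ q) _ hJm,
        ENNReal.mul_rpow_of_nonneg _ _ (by positivity), ← ENNReal.rpow_mul,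
        mul_one_div_cancel hq0.ne', ENNReal.rpow_one]
    rw [e]
    unfold _root_.lpNorm
    refine ENNReal.rpow_le_rpow (lintegral_mono_ae ?_) (by positivity)
    filter_upwards [hWw] with x hx
    rw [hx, ← ENNReal.mul_rpow_of_nonneg _ _ hq0.le]
    refine ENNReal.rpow_le_rpow ?_ hq0.le
    rw [mul_left_comm]
    exact mul_le_mul_right (hM x) _
  have hR : (∫⁻ x, (W x * g x) ^ p) ^ (1 / p) =
      lpNorm p (fun x => ENNReal.ofReal (w x) * ENNReal.ofReal ‖fderiv ℝ f x‖) volume := by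
    unfold _root_.lpNorm
    congr 1
    refine lintegral_congr_ae ?_
    filter_upwards [hWw] with x hx
    rw [hx, ofReal_norm]
  rw [hR, hexp] at hJ
  have hc : C₁ * C₂ ≤ ENNReal.ofReal ((C₁ * C₂).toReal + 1) := by
    conv_lhs => rw [← ENNReal.ofReal_toReal hCt]
    exact ENNReal.ofReal_le_ofReal (by linarith)
  refine hL.trans ((mul_le_mul_right hJ _).trans ?_)
  rw [← hC₂, ← mul_assoc, ← mul_assoc]
  gcongr
end
end
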